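/- Let ρ : Fin r → Equiv.Perm (Fin n) be a string C-group in the blocks-of-size-2 setup with m = n/2 ≥ 7 and r ≥ n/2, and suppose R ∪ C = {0}, i.e. L = Fin r \ {0}. Then r = n/2, the image of φ is all of Equiv.Perm (Fin m), and the block action of the generators is the path: there exists a bijection c : Fin m ≃ Fin m such that for every index j with 1 ≤ j ≤ r − 1, φ (ρ j) = Equiv.swap (c (j−1)) (c j). -/

import Mathlib

/-- A string group generated by involutions (sggi): each generator has order 2 and
nonconsecutive generators commute. -/
def IsSggi {n r : ℕ} (ρ : Fin r → Equiv.Perm (Fin n)) : Prop :=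
  (∀ i, orderOf (ρ i) = 2) ∧
  ∀ i j : Fin r, 1 < |((i : ℕ) : ℤ) - ((j : ℕ) : ℤ)| → (ρ i * ρ j) ^ 2 = 1

/-- A string C-group: an sggi satisfying the intersection property. -/
def IsStringC {n r : ℕ} (ρ : Fin r → Equiv.Perm (Fin n)) : Prop :=
  IsSggi ρ ∧ ∀ J K : Set (Fin r),
    Subgroup.closure (ρ '' J) ⊓ Subgroup.closure (ρ '' K) =
      Subgroup.closure (ρ '' (J ∩ K))

open Equiv

/-- Every element squares to the identity. -/
def Subgroup.IsElem2 {G : Type*} [Group G] (P : Subgroup G) : Prop := ∀ g ∈ P, g * g = 1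

namespace Subgroup.IsElem2

variable {G : Type*} [Group G] {P Q : Subgroup G}

theorem mono (hP : P.IsElem2) (h : Q ≤ P) : Q.IsElem2 := fun g hg => hP g (h hg)

theorem comm (hP : P.IsElem2) {g h : G} (hg : g ∈ P) (hh : h ∈ P) : g * h = h * g := by
  have h1 := hP _ (P.mul_mem hg hh)
  have h2 := hP _ hg
  have h3 := hP _ hh
  have : g * h = h⁻¹ * g⁻¹ := by
    rw [← mul_inv_rev]; exact eq_inv_of_mul_eq_one_left h1
  rw [this, ← eq_inv_of_mul_eq_one_left h2, ← eq_inv_of_mul_eq_one_left h3]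

theorem mem_sup_iff {t : G} (hct : ∀ g ∈ P, t * g = g * t) (ht : t * t = 1) {x : G} :
    x ∈ P ⊔ closure {t} ↔ x ∈ P ∨ t * x ∈ P := by
  constructor
  · intro hx
    rw [sup_eq_closure] at hx
    have hti : t⁻¹ = t := inv_eq_of_mul_eq_one_left ht
    have key : ∀ y ∈ (P : Set G) ∪ (closure {t} : Subgroup G), y ∈ P ∨ t * y ∈ P := by
      rintro y (hy | hy)
      · exact Or.inl hy
      · obtain ⟨n, rfl⟩ := mem_closure_singleton.1 hy
        rcases Int.even_or_odd n with ⟨k, rfl⟩ | ⟨k, rfl⟩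
        · left
          rw [← two_mul, zpow_mul, zpow_two, ht, one_zpow]; exact P.one_mem
        · right
          rw [zpow_add, zpow_mul, zpow_two, ht, one_zpow, one_mul, zpow_one, ht]
          exact P.one_mem
    induction hx using closure_induction with
    | mem y hy => exact key y hy
    | one => exact Or.inl P.one_mem
    | mul a b _ _ ha hb =>
      rcases ha with ha | ha <;> rcases hb with hb | hb
      · exact Or.inl (P.mul_mem ha hb)
      · right; rw [← mul_assoc, hct a ha, mul_assoc]; exact P.mul_mem ha hb
      · right; rw [← mul_assoc]; exact P.mul_mem ha hb
      · left
        have : a * b = (t * a) * (t * b) := by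
          rw [← mul_assoc, ← hct _ ha, ← mul_assoc t t a, ht, one_mul]
        rw [this]; exact P.mul_mem ha hb
    | inv a _ ha =>
      rcases ha with ha | ha
      · exact Or.inl (P.inv_mem ha)
      · right
        have h1 := hct _ ha
        have h2 : a = t * a * t := by rw [← h1, ← mul_assoc, ht, one_mul]
        have h3 : t * a⁻¹ = (t * a)⁻¹ := by
          rw [h2, mul_inv_rev, hti, ← mul_assoc, ht, one_mul, ← h2]
        rw [h3]; exact P.inv_mem ha
  · rintro (h | h)
    · exact mem_sup_left h
    · have h2 : x = t * (t * x) := by rw [← mul_assoc, ht, one_mul]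
      rw [h2]
      exact mul_mem (mem_sup_right (subset_closure rfl)) (mem_sup_left h)

theorem sup (hP : P.IsElem2) {t : G} (hct : ∀ g ∈ P, t * g = g * t) (ht : t * t = 1) :
    (P ⊔ closure {t}).IsElem2 := by
  intro x hx
  rcases (mem_sup_iff hct ht).1 hx with h | h
  · exact hP x h
  · have h1 := hP _ h
    have h2 := hct _ h
    have : t * x * (t * x) = x * x := by
      rw [← mul_assoc, ← h2, ← mul_assoc t t x, ht, one_mul]
    rw [← this, h1]

theorem card_sup_le [Finite G] {t : G} (hct : ∀ g ∈ P, t * g = g * t) (ht : t * t = 1) :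
    Nat.card (P ⊔ closure {t} : Subgroup G) ≤ 2 * Nat.card P := by
  have h : ((P ⊔ closure {t} : Subgroup G) : Set G) ⊆ (P : Set G) ∪ (fun x => t * x) '' P := by
    intro x hx
    rcases (mem_sup_iff hct ht).1 hx with h | h
    · exact Or.inl h
    · exact Or.inr ⟨_, h, by simp only; rw [← mul_assoc, ht, one_mul]⟩
  have h1 := Set.ncard_le_ncard h (Set.toFinite _)
  have h2 := Set.ncard_union_le (P : Set G) ((fun x => t * x) '' P)
  have h3 := Set.ncard_image_le (f := fun x => t * x) (Set.toFinite (P : Set G))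
  have e1 : Nat.card (P ⊔ closure {t} : Subgroup G) =
    ((P ⊔ closure {t} : Subgroup G) : Set G).ncard := rfl
  have e2 : Nat.card P = (P : Set G).ncard := rfl
  omega

theorem two_mul_card_le [Finite G] (hPQ : P ≤ Q) {t : G} (htQ : t ∈ Q) (ht : t ∉ P) :
    2 * Nat.card P ≤ Nat.card Q := by
  have h1 := card_dvd_of_le hPQ
  obtain ⟨k, hk⟩ := h1
  have hQ : 0 < Nat.card Q := Nat.card_pos
  have : k ≠ 1 := by
    rintro rfl
    have := eq_of_le_of_card_ge hPQ (by omega)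
    exact ht (this ▸ htQ)
  have : k ≠ 0 := by rintro rfl; omega
  rw [hk, mul_comm]
  exact Nat.mul_le_mul_left _ (by omega)

/-- A finite commuting family of involutions generates an elementary abelian 2-group. -/
theorem closure_image {s : ℕ → G} {J : Finset ℕ} (hs : ∀ i ∈ J, s i * s i = 1)
    (hc : ∀ i ∈ J, ∀ j ∈ J, s i * s j = s j * s i) :
    (closure (s '' J)).IsElem2 := by
  have hcomm : ∀ a ∈ closure (s '' J), ∀ b ∈ closure (s '' J), a * b = b * a := by
    have : IsMulCommutative (closure (s '' (J : Set ℕ))) := by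
      refine Subgroup.isMulCommutative_closure ?_
      rintro _ ⟨i, hi, rfl⟩ _ ⟨j, hj, rfl⟩
      exact hc i hi j hj
    intro a ha b hb
    have := this.is_comm.comm ⟨a, ha⟩ ⟨b, hb⟩
    simpa using congrArg Subtype.val this
  intro g hg
  induction hg using closure_induction with
  | mem y hy => obtain ⟨i, hi, rfl⟩ := hy; exact hs i hi
  | one => simp
  | mul a b ha hb h1 h2 =>
    rw [mul_assoc, ← mul_assoc b, hcomm b hb a ha, mul_assoc, h2, mul_one, h1]
  | inv a _ ha => rw [← mul_inv_rev, ha, inv_one]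

end Subgroup.IsElem2

theorem closure_image_insert {G : Type*} [Group G] (s : ℕ → G) (A : Set ℕ) (i : ℕ) :
    Subgroup.closure (s '' insert i A) = Subgroup.closure (s '' A) ⊔ Subgroup.closure {s i} := by
  rw [Set.image_insert_eq, Set.insert_eq, Subgroup.closure_union, sup_comm]

theorem commute_closure {G : Type*} [Group G] {A : Set G} {t : G}
    (h : ∀ a ∈ A, t * a = a * t) : ∀ g ∈ Subgroup.closure A, t * g = g * t := by
  intro g hg
  have : g ∈ Subgroup.centralizer {t} := by
    refine (Subgroup.closure_le (K := Subgroup.centralizer {t})).2 ?_ hg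
    intro a ha
    rw [SetLike.mem_coe, Subgroup.mem_centralizer_iff]
    rintro _ rfl
    exact h a ha
  exact Subgroup.mem_centralizer_iff.1 this t rfl

theorem card_closure_image {G : Type*} [Group G] [Finite G] {s : ℕ → G} {J : Finset ℕ}
    (hs : ∀ i ∈ J, s i * s i = 1) (hc : ∀ i ∈ J, ∀ j ∈ J, s i * s j = s j * s i)
    (hind : ∀ i ∈ J, s i ∉ Subgroup.closure (s '' (J.erase i : Finset ℕ))) :
    Nat.card (Subgroup.closure (s '' J)) = 2 ^ J.card := by
  induction J using Finset.induction_on with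
  | empty => simp
  | insert a J ha ih =>
    have ih' := ih (fun i hi => hs i (Finset.mem_insert_of_mem hi))
      (fun i hi j hj => hc i (Finset.mem_insert_of_mem hi) j (Finset.mem_insert_of_mem hj))
      (fun i hi hmem => hind i (Finset.mem_insert_of_mem hi)
        (Subgroup.closure_mono (Set.image_mono (by
          intro j hj; simp at hj ⊢; tauto)) hmem))
    have hna := hind a (Finset.mem_insert_self _ _)
    rw [Finset.erase_insert ha] at hna
    have haa : s a * s a = 1 := hs a (Finset.mem_insert_self _ _)
    have hca : ∀ g ∈ Subgroup.closure (s '' (J : Set ℕ)), s a * g = g * s a := by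
      refine commute_closure ?_
      rintro _ ⟨j, hj, rfl⟩
      exact hc a (Finset.mem_insert_self _ _) j (Finset.mem_insert_of_mem hj)
    rw [Finset.coe_insert, closure_image_insert, Finset.card_insert_of_notMem ha, pow_succ,
      mul_comm, ← ih']
    refine le_antisymm (Subgroup.IsElem2.card_sup_le hca haa) ?_
    exact Subgroup.IsElem2.two_mul_card_le le_sup_left
      (Subgroup.mem_sup_right (Subgroup.subset_closure rfl)) hna

theorem card_closure_image_le {G : Type*} [Group G] [Finite G] {s : ℕ → G} {J : Finset ℕ}
    (hs : ∀ i ∈ J, s i * s i = 1) (hc : ∀ i ∈ J, ∀ j ∈ J, s i * s j = s j * s i) :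
    Nat.card (Subgroup.closure (s '' J)) ≤ 2 ^ J.card := by
  induction J using Finset.induction_on with
  | empty => simp
  | insert a J ha ih =>
    have ih' := ih (fun i hi => hs i (Finset.mem_insert_of_mem hi))
      (fun i hi j hj => hc i (Finset.mem_insert_of_mem hi) j (Finset.mem_insert_of_mem hj))
    have hca : ∀ g ∈ Subgroup.closure (s '' (J : Set ℕ)), s a * g = g * s a := by
      refine commute_closure ?_
      rintro _ ⟨j, hj, rfl⟩
      exact hc a (Finset.mem_insert_self _ _) j (Finset.mem_insert_of_mem hj)
    rw [Finset.coe_insert, closure_image_insert, Finset.card_insert_of_notMem ha, pow_succ]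
    have := Subgroup.IsElem2.card_sup_le hca (hs a (Finset.mem_insert_self _ _))
    omega

/-- If `τ` normalizes the group generated by commuting involutions which stay independent after
adjoining `τ`, then `τ` centralizes it. -/
theorem commute_of_normalizes {G : Type*} [Group G] {s : ℕ → G} {J : Finset ℕ} {t : G}
    (hs : ∀ i ∈ J, s i * s i = 1) (hc : ∀ i ∈ J, ∀ j ∈ J, s i * s j = s j * s i)
    (ht : t * t = 1)
    (hind : ∀ i ∈ J, s i ∉ Subgroup.closure (s '' (J.erase i : Finset ℕ) ∪ {t}))
    (hn : ∀ g ∈ Subgroup.closure (s '' J), t * g * t ∈ Subgroup.closure (s '' J)) :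
    ∀ j ∈ J, t * s j = s j * t := by
  have hmem : ∀ A ⊆ J, ∀ c ∈ J, c ∉ A → ∀ g, g ∈ Subgroup.closure (s '' (insert c A : Finset ℕ)) →
      g ∈ Subgroup.closure (s '' (A : Set ℕ)) ∨ s c * g ∈ Subgroup.closure (s '' (A : Set ℕ)) := by
    intro A hA c hcJ _ g hg
    rw [Finset.coe_insert, closure_image_insert] at hg
    refine (Subgroup.IsElem2.mem_sup_iff (commute_closure ?_) (hs c hcJ)).1 hg
    rintro _ ⟨j, hj, rfl⟩
    exact hc c hcJ j (hA hj)
  have hV : ∀ c, Subgroup.closure (s '' (J.erase c : Finset ℕ)) ≤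
      Subgroup.closure (s '' (J.erase c : Finset ℕ) ∪ {t}) :=
    fun c => Subgroup.closure_mono Set.subset_union_left
  have htV : ∀ c, t ∈ Subgroup.closure (s '' (J.erase c : Finset ℕ) ∪ {t}) :=
    fun c => Subgroup.subset_closure (Or.inr rfl)
  -- an element lying in every `V c` is trivial
  have hinter : ∀ h, h ∈ Subgroup.closure (s '' (J : Set ℕ)) →
      (∀ c ∈ J, h ∈ Subgroup.closure (s '' (J.erase c : Finset ℕ))) → h = 1 := by
    intro h hJ hh
    have : ∀ A ⊆ J, h ∈ Subgroup.closure (s '' ((J \ A : Finset ℕ) : Set ℕ)) := by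
      intro A
      induction A using Finset.induction_on with
      | empty => intro _; simpa using hJ
      | insert c A hcA ih =>
        intro hA
        have hcJ : c ∈ J := hA (Finset.mem_insert_self _ _)
        have h1 := ih (fun x hx => hA (Finset.mem_insert_of_mem hx))
        have e : J \ A = insert c (J \ insert c A) := by
          ext x; simp only [Finset.mem_sdiff, Finset.mem_insert]
          constructor
          · intro hx; tauto
          · rintro (rfl | hx)
            · exact ⟨hcJ, hcA⟩
            · tauto
        rw [e] at h1
        rcases hmem _ Finset.sdiff_subset c hcJ (by simp) h h1 with h2 | h2
        · exact h2
        · exfalso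
          have hle : Subgroup.closure (s '' ((J \ insert c A : Finset ℕ) : Set ℕ)) ≤
              Subgroup.closure (s '' (J.erase c : Finset ℕ)) :=
            Subgroup.closure_mono (Set.image_mono (by intro x hx; simp at hx ⊢; tauto))
          have h3 := mul_mem (hle h2) (inv_mem (hh c hcJ))
          rw [mul_inv_cancel_right] at h3
          exact hind c hcJ (hV c h3)
    have := this J subset_rfl
    simpa using this
  intro j hj
  have hsub : ∀ c, Subgroup.closure (s '' (J.erase c : Finset ℕ)) ≤ Subgroup.closure (s '' (J : Set ℕ)) :=
    fun c => Subgroup.closure_mono (Set.image_mono (by intro x hx; simp at hx ⊢; tauto))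
  have hsj : s j ∈ Subgroup.closure (s '' (J : Set ℕ)) := Subgroup.subset_closure ⟨j, hj, rfl⟩
  have hE := hn _ hsj
  have key : s j * (t * s j * t) = 1 := by
    refine hinter _ (mul_mem hsj hE) ?_
    intro c hcJ
    rw [← Finset.insert_erase hcJ] at hE
    have h1 := hmem _ (Finset.erase_subset _ _) c hcJ (by simp) _ hE
    by_cases hcj : c = j
    · subst hcj
      rcases h1 with h1 | h1
      · exfalso
        have h2 := mul_mem (mul_mem (htV c) (hV c h1)) (htV c)
        have e : t * (t * s c * t) * t = s c := by
          rw [mul_assoc, mul_assoc, mul_assoc, ht, mul_one, ← mul_assoc, ht, one_mul]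
        rw [e] at h2
        exact hind c hcJ h2
      · exact h1
    · have hjc : s j ∈ Subgroup.closure (s '' (J.erase c : Finset ℕ)) :=
        Subgroup.subset_closure ⟨j, by simp [hj, Ne.symm hcj], rfl⟩
      refine mul_mem hjc ?_
      rcases h1 with h1 | h1
      · exact h1
      · exfalso
        have h2 := mul_mem (hV c h1) (inv_mem (mul_mem (mul_mem (htV c) (hV c hjc)) (htV c)))
        rw [mul_inv_cancel_right] at h2
        exact hind c hcJ h2
  have h1 : s j * (s j * (t * s j * t)) = s j := by rw [key, mul_one]
  rw [← mul_assoc, hs j hj, one_mul] at h1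
  calc t * s j = t * s j * t * t := by rw [mul_assoc _ t t, ht, mul_one]
    _ = s j * t := by rw [h1]

namespace Subgroup

variable {Ω : Type*}

/-- The orbit of `x` under a permutation group. -/
def orb (P : Subgroup (Perm Ω)) (x : Ω) : Set Ω := {y | ∃ g ∈ P, g x = y}

/-- The pointwise stabilizer of `S` inside `P`. -/
def fixer (P : Subgroup (Perm Ω)) (S : Set Ω) : Subgroup (Perm Ω) where
  carrier := {g | g ∈ P ∧ ∀ x ∈ S, g x = x}
  one_mem' := ⟨P.one_mem, fun _ _ => rfl⟩
  mul_mem' := fun {a b} ha hb => ⟨P.mul_mem ha.1 hb.1, fun x hx => by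
    rw [Perm.mul_apply, hb.2 x hx, ha.2 x hx]⟩
  inv_mem' := fun {a} ha => ⟨P.inv_mem ha.1, fun x hx => by
    rw [Perm.inv_eq_iff_eq, ha.2 x hx]⟩

theorem mem_fixer {P : Subgroup (Perm Ω)} {S : Set Ω} {g : Perm Ω} :
    g ∈ P.fixer S ↔ g ∈ P ∧ ∀ x ∈ S, g x = x := Iff.rfl

theorem fixer_le (P : Subgroup (Perm Ω)) (S : Set Ω) : P.fixer S ≤ P := fun _ h => h.1

theorem mem_orb_self (P : Subgroup (Perm Ω)) (x : Ω) : x ∈ P.orb x := ⟨1, P.one_mem, rfl⟩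

theorem apply_mem_orb {P : Subgroup (Perm Ω)} {g : Perm Ω} (hg : g ∈ P) (x : Ω) :
    g x ∈ P.orb x := ⟨g, hg, rfl⟩

theorem orb_eq_of_mem {P : Subgroup (Perm Ω)} {x y : Ω} (h : y ∈ P.orb x) :
    P.orb y = P.orb x := by
  obtain ⟨g, hg, rfl⟩ := h
  ext z
  constructor
  · rintro ⟨k, hk, rfl⟩; exact ⟨k * g, P.mul_mem hk hg, rfl⟩
  · rintro ⟨k, hk, rfl⟩
    exact ⟨k * g⁻¹, P.mul_mem hk (P.inv_mem hg), by simp⟩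

theorem orb_invariant {P : Subgroup (Perm Ω)} {g : Perm Ω} (hg : g ∈ P) {x z : Ω}
    (hz : z ∈ P.orb x) : g z ∈ P.orb x := by
  rw [← orb_eq_of_mem hz]; exact apply_mem_orb hg z

theorem orb_mapsTo (P : Subgroup (Perm Ω)) (x : Ω) : ∀ g ∈ P, ∀ z ∈ P.orb x, g z ∈ P.orb x :=
  fun _ hg _ hz => orb_invariant hg hz

theorem orb_disjoint {P : Subgroup (Perm Ω)} {x y : Ω} (h : y ∉ P.orb x) :
    Disjoint (P.orb x) (P.orb y) := by
  rw [Set.disjoint_left]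
  intro z hz hz'
  exact h (by rw [← orb_eq_of_mem hz, orb_eq_of_mem hz']; exact mem_orb_self _ _)

theorem orb_subset {P : Subgroup (Perm Ω)} {S : Set Ω} (hS : ∀ g ∈ P, ∀ x ∈ S, g x ∈ S) {x : Ω}
    (hx : x ∈ S) : P.orb x ⊆ S := by
  rintro _ ⟨g, hg, rfl⟩; exact hS g hg x hx

theorem compl_invariant {P : Subgroup (Perm Ω)} {S : Set Ω} (hS : ∀ g ∈ P, ∀ x ∈ S, g x ∈ S) :
    ∀ g ∈ P, ∀ x ∈ Sᶜ, g x ∈ Sᶜ := by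
  intro g hg x hx h
  have := hS _ (P.inv_mem hg) _ h
  exact hx (by simpa using this)

theorem card_eq_orb_mul [Finite Ω] (P : Subgroup (Perm Ω)) (x : Ω) :
    Nat.card P = (P.orb x).ncard * Nat.card (P.fixer {x}) := by
  have h1 := (MulAction.stabilizer P x).index_mul_card
  rw [MulAction.index_stabilizer] at h1
  have e1 : MulAction.orbit P x = P.orb x := by
    ext y; constructor
    · rintro ⟨⟨g, hg⟩, rfl⟩; exact ⟨g, hg, rfl⟩
    · rintro ⟨g, hg, rfl⟩; exact ⟨⟨g, hg⟩, rfl⟩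
  have e2 : Nat.card (MulAction.stabilizer P x) = Nat.card (P.fixer {x}) := by
    refine Nat.card_congr ⟨fun g => ⟨g.1.1, g.1.2, ?_⟩, fun g => ⟨⟨g.1, g.2.1⟩, ?_⟩, ?_, ?_⟩
    · rintro _ rfl; exact g.2
    · exact g.2.2 x rfl
    · intro g; rfl
    · intro g; rfl
  rw [← h1, e1, e2]

theorem IsElem2.fix_orb {P : Subgroup (Perm Ω)} (hP : P.IsElem2) {g : Perm Ω} {x : Ω}
    (hg : g ∈ P) (hx : g x = x) {y : Ω} (hy : y ∈ P.orb x) : g y = y := by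
  obtain ⟨k, hk, rfl⟩ := hy
  have := DFunLike.congr_fun (hP.comm hg hk) x
  simp only [Perm.mul_apply] at this
  rw [this, hx]

theorem IsElem2.apply_apply {P : Subgroup (Perm Ω)} (hP : P.IsElem2) {g : Perm Ω} (hg : g ∈ P)
    (x : Ω) : g (g x) = x := by
  have := DFunLike.congr_fun (hP g hg) x
  simpa using this

theorem apply_apply_of_mul_self {τ : Perm Ω} (hτ : τ * τ = 1) (x : Ω) : τ (τ x) = x := by
  have := DFunLike.congr_fun hτ x
  simpa using this

theorem IsElem2.eq_on_orb {P : Subgroup (Perm Ω)} (hP : P.IsElem2) {a b : Perm Ω} (ha : a ∈ P)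
    (hb : b ∈ P) {x y : Ω} (h : a x = b x) (hy : y ∈ P.orb x) : a y = b y := by
  have := hP.fix_orb (P.mul_mem (P.inv_mem hb) ha) (x := x) (by
    rw [Perm.mul_apply, h]; simp) hy
  rwa [Perm.mul_apply, Perm.inv_eq_iff_eq] at this

theorem fix_of_centralizes {W M : Subgroup (Perm Ω)} (hWM : ∀ w ∈ W, ∀ g ∈ M, g * w = w * g)
    {x y : Ω} {w : Perm Ω} (hw : w ∈ W) (hy : y ∈ M.orb x) (h : w y = y) {z : Ω}
    (hz : z ∈ M.orb x) : w z = z := by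
  rw [← orb_eq_of_mem hy] at hz
  obtain ⟨g, hg, rfl⟩ := hz
  have := DFunLike.congr_fun (hWM w hw g hg) y
  simp only [Perm.mul_apply] at this
  rw [← this, h]

theorem IsElem2.fixer_orb {P : Subgroup (Perm Ω)} (hP : P.IsElem2) (x : Ω) :
    P.fixer {x} = P.fixer (P.orb x) := by
  ext g
  constructor
  · rintro ⟨hg, hx⟩; exact ⟨hg, fun y hy => hP.fix_orb hg (hx x rfl) hy⟩
  · rintro ⟨hg, hx⟩; exact ⟨hg, by rintro _ rfl; exact hx _ (mem_orb_self _ _)⟩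

theorem IsElem2.ncard_orb_ne_three [Finite Ω] {P : Subgroup (Perm Ω)} (hP : P.IsElem2) (x : Ω) :
    (P.orb x).ncard ≠ 3 := by
  intro h
  have h1 := card_eq_orb_mul P x
  rw [h] at h1
  have : Fact (Nat.Prime 3) := ⟨Nat.prime_three⟩
  obtain ⟨g, hg⟩ := exists_prime_orderOf_dvd_card' (G := P) 3 ⟨_, h1⟩
  have h2 : orderOf g ∣ 2 := orderOf_dvd_of_pow_eq_one (by
    ext1; rw [pow_two]; exact hP g g.2)
  rw [hg] at h2
  omega

theorem sq_le_two_pow {k : ℕ} (hk : k ≠ 3) : k * k ≤ 2 ^ k := by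
  rcases Nat.lt_or_ge k 4 with h | h
  · interval_cases k <;> simp_all
  · clear hk
    induction k, h using Nat.le_induction with
    | base => norm_num
    | succ k hk ih => rw [pow_succ]; nlinarith

theorem eq_two_or_four {k : ℕ} (hk : k * k = 2 ^ k) : k = 2 ∨ k = 4 := by
  rcases Nat.lt_or_ge k 5 with h | h
  · interval_cases k <;> simp_all
  · have : ∀ j, 5 ≤ j → j * j < 2 ^ j := by
      intro j hj
      induction j, hj using Nat.le_induction with
      | base => norm_num
      | succ j hj ih => rw [pow_succ]; nlinarith
    have := this k h
    omega

/-- An elementary abelian 2-group acts on an invariant set of size `k` through a group of order at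
most `2 ^ (k / 2)`. -/
theorem IsElem2.card_sq_le [Finite Ω] {P : Subgroup (Perm Ω)} (hP : P.IsElem2) {S : Set Ω}
    (hS : ∀ g ∈ P, ∀ x ∈ S, g x ∈ S) :
    Nat.card P * Nat.card P ≤ 2 ^ S.ncard * (Nat.card (P.fixer S) * Nat.card (P.fixer S)) := by
  induction hk : S.ncard using Nat.strong_induction_on generalizing P S with
  | _ k ih =>
    rcases S.eq_empty_or_nonempty with rfl | ⟨x, hx⟩
    · have : P.fixer ∅ = P := by ext g; simp [mem_fixer]
      simp only [Set.ncard_empty] at hk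
      subst hk
      rw [this]; simp
    · have hsub := orb_subset hS hx
      have hcard : (S \ P.orb x).ncard + (P.orb x).ncard = S.ncard :=
        Set.ncard_sdiff_add_ncard_of_subset hsub (Set.toFinite _)
      have hpos : 0 < (P.orb x).ncard := (Set.ncard_pos (Set.toFinite _)).2 ⟨x, mem_orb_self _ _⟩
      have h1 := ih (S \ P.orb x).ncard (by omega) (hP.mono (P.fixer_le {x}))
        (S := S \ P.orb x) (by
          rintro g hg z ⟨hz1, hz2⟩
          exact ⟨hS g hg.1 z hz1, compl_invariant (fun g hg z hz => orb_invariant hg hz) g hg.1 z hz2⟩)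
        rfl
      have e : (P.fixer {x}).fixer (S \ P.orb x) = P.fixer S := by
        rw [hP.fixer_orb]
        ext g
        simp only [mem_fixer]
        constructor
        · rintro ⟨⟨a, b⟩, c⟩
          refine ⟨a, fun y hy => ?_⟩
          by_cases hyo : y ∈ P.orb x
          · exact b y hyo
          · exact c y ⟨hy, hyo⟩
        · rintro ⟨a, b⟩
          exact ⟨⟨a, fun y hy => b y (hsub hy)⟩, fun y hy => b y hy.1⟩
      rw [e] at h1
      have h2 := sq_le_two_pow (hP.ncard_orb_ne_three x)
      rw [card_eq_orb_mul P x, ← hk, ← hcard, pow_add]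
      calc _ = ((P.orb x).ncard * (P.orb x).ncard) *
            (Nat.card (P.fixer {x}) * Nat.card (P.fixer {x})) := by ring
        _ ≤ 2 ^ (P.orb x).ncard * (2 ^ (S \ P.orb x).ncard *
            (Nat.card (P.fixer S) * Nat.card (P.fixer S))) := Nat.mul_le_mul h2 h1
        _ = _ := by ring

theorem card_fixer_eq_one {P : Subgroup (Perm Ω)} {S : Set Ω}
    (h : ∀ g ∈ P, (∀ x ∈ S, g x = x) → g = 1) : Nat.card (P.fixer S) = 1 := by
  have : P.fixer S = ⊥ := by
    rw [eq_bot_iff]; rintro g ⟨hg, hx⟩; exact h g hg hx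
  rw [this]; simp

/-- Two orbits of size two, of which `τ` exchanges one point of each. -/
structure IsTypeA (E W : Subgroup (Perm Ω)) (τ : Perm Ω) (x y x' y' : Ω) : Prop where
  orb_left : E.orb x = {x, y}
  orb_right : E.orb x' = {x', y'}
  ne_left : x ≠ y
  ne_right : x' ≠ y'
  notMem : x' ∉ E.orb x
  apply_left : τ x = x'
  fix_left : τ y = y
  fix_right : τ y' = y'
  fix : ∀ w ∈ W, w x = x ∧ w x' = x'
  mem : ∀ g ∈ E, g x = x → g x' = x' → g ∈ W
  off : ∀ z, z ∉ E.orb x → z ∉ E.orb x' → τ z ∈ E.orb z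

/-- An orbit of size four and an orbit of size two, linked by `τ`; on these `W` acts as the group
generated by the fixed-point-free involution `w`. -/
structure IsTypeB (E W : Subgroup (Perm Ω)) (τ : Perm Ω) (O : Set Ω) (p q : Ω) (w : Perm Ω) :
    Prop where
  ncard : O.ncard = 4
  orb : ∀ z ∈ O, E.orb z = O
  orb_pair : E.orb p = {p, q}
  ne : p ≠ q
  apply_pair : τ p ∈ O
  mem_w : w ∈ W
  w_ne : ∀ z ∈ O ∪ {p, q}, w z ≠ z
  eq_on : ∀ v ∈ W, (∀ z ∈ O ∪ {p, q}, v z = z) ∨ ∀ z ∈ O ∪ {p, q}, v z = w z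
  mem : ∀ g ∈ E, (∀ z ∈ O ∪ {p, q}, g z = z) → g ∈ W
  off : ∀ z ∉ O ∪ {p, q}, τ z ∈ E.orb z

/-- An elementary abelian 2-group of the largest possible order. -/
structure IsMaxElem2 (E : Subgroup (Perm Ω)) : Prop where
  elem : E.IsElem2
  card_sq : Nat.card E * Nat.card E = 2 ^ Nat.card Ω

namespace IsMaxElem2

variable [Finite Ω] {E : Subgroup (Perm Ω)}

theorem card_fixer_sq (hE : E.IsMaxElem2) {Y : Set Ω} (hY : ∀ g ∈ E, ∀ x ∈ Y, g x ∈ Y) :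
    Nat.card (E.fixer Yᶜ) * Nat.card (E.fixer Yᶜ) = 2 ^ Y.ncard := by
  have h1 := hE.elem.card_sq_le (compl_invariant hY)
  have h2 := (hE.elem.mono (E.fixer_le Yᶜ)).card_sq_le (S := Y) (fun g hg => hY g hg.1)
  rw [card_fixer_eq_one (P := E.fixer Yᶜ) (by
    rintro g ⟨_, hg⟩ h
    ext x
    by_cases hx : x ∈ Y
    · exact h x hx
    · exact hg x hx)] at h2
  have h3 : Y.ncard + Yᶜ.ncard = Nat.card Ω := Set.ncard_add_ncard_compl Y
  rw [hE.card_sq, ← h3, pow_add, mul_comm] at h1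
  have h4 := Nat.le_of_mul_le_mul_left h1 (by positivity)
  omega

theorem card_eq_mul (hE : E.IsMaxElem2) {Y : Set Ω}
    (hY : ∀ g ∈ E, ∀ x ∈ Y, g x ∈ Y) :
    Nat.card E = Nat.card (E.fixer Yᶜ) * Nat.card (E.fixer Y) := by
  have h1 := hE.card_fixer_sq hY
  have h2 := hE.card_fixer_sq (compl_invariant hY)
  rw [compl_compl] at h2
  have h3 : Y.ncard + Yᶜ.ncard = Nat.card Ω := Set.ncard_add_ncard_compl Y
  have h4 := hE.card_sq
  rw [← h3, pow_add, ← h1, ← h2] at h4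
  refine Nat.mul_self_inj.1 ?_
  rw [h4]; ring

theorem exists_mul (hE : E.IsMaxElem2) {Y : Set Ω} (hY : ∀ g ∈ E, ∀ x ∈ Y, g x ∈ Y)
    {g : Perm Ω} (hg : g ∈ E) : ∃ a ∈ E.fixer Yᶜ, ∃ b ∈ E.fixer Y, a * b = g := by
  have h5 := hE.card_eq_mul hY
  let f : (E.fixer Yᶜ) × (E.fixer Y) → E := fun p =>
    ⟨p.1.1 * p.2.1, E.mul_mem p.1.2.1 p.2.2.1⟩
  have hinj : Function.Injective f := by
    rintro ⟨⟨a, ha⟩, ⟨b, hb⟩⟩ ⟨⟨a', ha'⟩, ⟨b', hb'⟩⟩ h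
    have h' : a * b = a' * b' := congrArg Subtype.val h
    have haa : a = a' := by
      ext x
      by_cases hx : x ∈ Y
      · have := DFunLike.congr_fun h' x
        simpa [Perm.mul_apply, hb.2 x hx, hb'.2 x hx] using this
      · rw [ha.2 x hx, ha'.2 x hx]
    subst haa
    have := mul_left_cancel h'
    subst this
    rfl
  have hbij := (Nat.bijective_iff_injective_and_card f).2 ⟨hinj, by rw [Nat.card_prod, h5]⟩
  obtain ⟨⟨a, b⟩, hab⟩ := hbij.2 ⟨g, hg⟩
  exact ⟨a, a.2, b, b.2, congrArg Subtype.val hab⟩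

/-- Every element of `E` can be restricted to an invariant set. -/
theorem exists_restrict (hE : E.IsMaxElem2) {Y : Set Ω} (hY : ∀ g ∈ E, ∀ x ∈ Y, g x ∈ Y)
    {g : Perm Ω} (hg : g ∈ E) : ∃ a ∈ E, (∀ x ∈ Y, a x = g x) ∧ ∀ x ∉ Y, a x = x := by
  obtain ⟨a, ha, b, hb, rfl⟩ := hE.exists_mul hY hg
  exact ⟨a, ha.1, fun x hx => by rw [Perm.mul_apply, hb.2 x hx], ha.2⟩

theorem card_fixer_orb (hE : E.IsMaxElem2) (x : Ω) :
    Nat.card (E.fixer (E.orb x)ᶜ) = (E.orb x).ncard := by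
  refine Nat.card_eq_of_bijective
    (fun a : E.fixer (E.orb x)ᶜ => (⟨a.1 x, apply_mem_orb a.2.1 x⟩ : E.orb x)) ⟨?_, ?_⟩
  · rintro ⟨a, ha⟩ ⟨b, hb⟩ h
    have h' : a x = b x := congrArg Subtype.val h
    refine Subtype.ext (Equiv.ext fun z => ?_)
    by_cases hz : z ∈ E.orb x
    · have h1 : (b⁻¹ * a) x = x := by rw [Perm.mul_apply, h']; simp
      have := hE.elem.fix_orb (E.mul_mem (E.inv_mem hb.1) ha.1) h1 hz
      rw [Perm.mul_apply, Perm.inv_eq_iff_eq] at this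
      exact this
    · change a z = b z
      rw [ha.2 z hz, hb.2 z hz]
  · rintro ⟨y, g, hg, rfl⟩
    obtain ⟨a, haE, ha, ha'⟩ := hE.exists_restrict (orb_mapsTo E x) hg
    exact ⟨⟨a, haE, ha'⟩, Subtype.ext (ha x (mem_orb_self _ _))⟩

theorem ncard_orb (hE : E.IsMaxElem2) (x : Ω) : (E.orb x).ncard = 2 ∨ (E.orb x).ncard = 4 := by
  have h := hE.card_fixer_sq (orb_mapsTo E x)
  rw [hE.card_fixer_orb] at h
  exact eq_two_or_four h

theorem exists_restrict_apply_ne (hE : E.IsMaxElem2) (x : Ω) :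
    ∃ g ∈ E, g x ≠ x ∧ ∀ z ∉ E.orb x, g z = z := by
  have h : 1 < (E.orb x).ncard := by rcases hE.ncard_orb x with h | h <;> omega
  obtain ⟨y, ⟨g, hg, rfl⟩, hne⟩ := Set.exists_ne_of_one_lt_ncard h x
  obtain ⟨a, haE, ha, ha'⟩ := hE.exists_restrict (orb_mapsTo E x) hg
  exact ⟨a, haE, by rwa [ha x (mem_orb_self _ _)], ha'⟩

end IsMaxElem2

end Subgroup

namespace Subgroup

variable {Ω : Type*} [Finite Ω] {E W : Subgroup (Perm Ω)} {τ : Perm Ω}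

/-- To normalize `E` it suffices to conjugate into `E` the elements supported on one orbit. -/
theorem IsMaxElem2.conj_mem (hE : E.IsMaxElem2) (hτ : τ * τ = 1)
    (h : ∀ x, ∀ a ∈ E, (∀ z ∉ E.orb x, a z = z) → τ * a * τ ∈ E) : ∀ g ∈ E, τ * g * τ ∈ E := by
  intro g hg
  induction hk : {z | g z ≠ z}.ncard using Nat.strong_induction_on generalizing g with
  | _ k ih =>
    by_cases h1 : g = 1
    · subst h1; rw [mul_one, hτ]; exact E.one_mem
    · obtain ⟨x, hx⟩ : ∃ x, g x ≠ x := by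
        by_contra! hcon
        exact h1 (Equiv.ext hcon)
      obtain ⟨a, haE, ha, ha'⟩ := hE.exists_restrict (orb_mapsTo E x) hg
      have hag := E.mul_mem (E.inv_mem haE) hg
      have hlt : {z | (a⁻¹ * g) z ≠ z}.ncard < k := by
        rw [← hk]
        refine Set.ncard_lt_ncard ⟨?_, ?_⟩ (Set.toFinite _)
        · intro z hz hgz
          apply hz
          by_cases hzo : z ∈ E.orb x
          · rw [Perm.mul_apply, ← ha z hzo]; simp
          · rw [Perm.mul_apply, hgz, Perm.inv_eq_iff_eq, ha' z hzo]
        · intro hsub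
          refine hsub (show x ∈ {z | g z ≠ z} from hx) ?_
          rw [Perm.mul_apply, ← ha x (mem_orb_self _ _)]; simp
      have h2 := ih _ hlt _ hag rfl
      have h3 := E.mul_mem (h x a haE ha') h2
      convert h3 using 1
      rw [show τ * a * τ * (τ * (a⁻¹ * g) * τ) = τ * a * (τ * τ) * (a⁻¹ * g) * τ by group, hτ]
      group

theorem IsMaxElem2.conj_mem_of_orb_invariant (hE : E.IsMaxElem2) (hτ : τ * τ = 1) {x : Ω}
    (ho : ∀ z ∈ E.orb x, τ z ∈ E.orb x) {a : Perm Ω} (ha : a ∈ E)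
    (hsupp : ∀ z ∉ E.orb x, a z = z) : τ * a * τ ∈ E := by
  have hττ := apply_apply_of_mul_self hτ
  by_cases hax : a x = x
  · have : a = 1 := by
      ext z
      by_cases hz : z ∈ E.orb x
      · exact hE.elem.fix_orb ha hax hz
      · exact hsupp z hz
    rw [this, mul_one, hτ]; exact E.one_mem
  have hfree : ∀ z ∈ E.orb x, a z ≠ z := fun z hz h =>
    hax (hE.elem.fix_orb ha h (by rw [orb_eq_of_mem hz]; exact mem_orb_self _ _))
  set h : Perm Ω := τ * a * τ with hh
  have happ : ∀ z, h z = τ (a (τ z)) := fun z => rfl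
  have ho' : ∀ z ∉ E.orb x, τ z ∉ E.orb x := fun z hz h => hz (by simpa [hττ] using ho _ h)
  have hmem : ∀ z ∈ E.orb x, h z ∈ E.orb x := fun z hz => ho _ (orb_invariant ha (ho _ hz))
  have hoff : ∀ z ∉ E.orb x, h z = z := fun z hz => by rw [happ, hsupp _ (ho' z hz), hττ]
  have hne : ∀ z ∈ E.orb x, h z ≠ z := fun z hz heq => hfree _ (ho z hz) (by
    rw [happ] at heq; rw [← hττ (a (τ z)), heq])
  have hhh : ∀ z, h (h z) = z := fun z => by
    rw [happ, happ, hττ, hE.elem.apply_apply ha, hττ]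
  obtain ⟨g, hg, hgx⟩ := hmem x (mem_orb_self _ _)
  obtain ⟨b, hbE, hb, hb'⟩ := hE.exists_restrict (orb_mapsTo E x) hg
  have hbx : b x = h x := by rw [hb x (mem_orb_self _ _), hgx]
  have hbb : ∀ z, b (b z) = z := hE.elem.apply_apply hbE
  have hbne : ∀ z ∈ E.orb x, b z ≠ z := fun z hz heq =>
    hne x (mem_orb_self _ _) (by
      rw [← hbx]
      exact hE.elem.fix_orb hbE heq (by rw [orb_eq_of_mem hz]; exact mem_orb_self _ _))
  suffices h = b by rw [this]; exact hbE
  ext z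
  by_cases hz : z ∈ E.orb x
  swap
  · rw [hoff z hz, hb' z hz]
  by_contra hcon
  have hzx : z ≠ x := by rintro rfl; exact hcon hbx.symm
  have hzhx : z ≠ h x := by
    rintro rfl; apply hcon; rw [hhh, ← hbx, hbb]
  have hsub : ({x, h x, z, h z, b z} : Set Ω) ⊆ E.orb x := by
    intro y hy
    simp only [Set.mem_insert_iff, Set.mem_singleton_iff] at hy
    rcases hy with rfl | rfl | rfl | rfl | rfl
    · exact mem_orb_self _ _
    · exact hmem x (mem_orb_self _ _)
    · exact hz
    · exact hmem z hz
    · exact orb_invariant hbE hz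
  have h1 := Set.ncard_le_ncard hsub (Set.toFinite _)
  have hxo := mem_orb_self E x
  have n1 := hne x hxo
  have n2 := hne z hz
  have n3 := hbne z hz
  have n4 : h z ≠ x := fun e => hzhx (by rw [← e, hhh])
  have n5 : h z ≠ h x := fun e => hzx (h.injective e)
  have n6 : b z ≠ x := fun e => hzhx (by rw [← hbx, ← e, hbb])
  have n7 : b z ≠ h x := fun e => hzx (b.injective (by rw [e, hbx]))
  have hc : ({x, h x, z, h z, b z} : Set Ω).ncard = 5 := by
    rw [Set.ncard_insert_of_notMem, Set.ncard_insert_of_notMem, Set.ncard_insert_of_notMem,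
      Set.ncard_pair hcon]
    · simp [n2.symm, n3.symm]
    · simp [hzhx.symm, n5.symm, n7.symm]
    · simp [n1.symm, hzx.symm, n4.symm, n6.symm]
  rcases hE.ncard_orb x with h2 | h2 <;> omega

theorem IsMaxElem2.conj_mem_of_orb_eq (hE : E.IsMaxElem2) (hτ : τ * τ = 1) (hWE : W ≤ E)
    (hWτ : ∀ w ∈ W, τ * w = w * τ) {x : Ω} (h1 : W.orb x = E.orb x)
    (h2 : W.orb (τ x) = E.orb (τ x)) {a : Perm Ω} (ha : a ∈ E)
    (hsupp : ∀ z ∉ E.orb x, a z = z) : τ * a * τ ∈ E := by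
  have hττ := apply_apply_of_mul_self hτ
  have hcomm : ∀ w ∈ W, ∀ z, τ (w z) = w (τ z) := fun w hw z => DFunLike.congr_fun (hWτ w hw) z
  have hax : a x ∈ W.orb x := by rw [h1]; exact apply_mem_orb ha x
  obtain ⟨w, hw, hwx⟩ := hax
  obtain ⟨b, hbE, hb, hb'⟩ := hE.exists_restrict (orb_mapsTo E (τ x)) (hWE hw)
  have him : ∀ z, z ∈ E.orb (τ x) ↔ τ z ∈ E.orb x := by
    intro z
    rw [← h1, ← h2]
    constructor
    · rintro ⟨v, hv, rfl⟩; exact ⟨v, hv, by rw [hcomm v hv, hττ]⟩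
    · rintro ⟨v, hv, hvz⟩; exact ⟨v, hv, by rw [← hcomm v hv, hvz, hττ]⟩
  suffices τ * a * τ = b by rw [this]; exact hbE
  ext z
  simp only [Perm.mul_apply]
  by_cases hz : z ∈ E.orb (τ x)
  · rw [hb z hz, hE.elem.eq_on_orb ha (hWE hw) hwx.symm ((him z).1 hz), hcomm w hw, hττ]
  · rw [hb' z hz, hsupp _ (fun h => hz ((him z).2 h)), hττ]

end Subgroup

namespace Subgroup

variable {Ω : Type*} [Finite Ω] {E W : Subgroup (Perm Ω)} {τ : Perm Ω}

theorem ncard_orb_of_centralizes {W M : Subgroup (Perm Ω)}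
    (hWM : ∀ w ∈ W, ∀ g ∈ M, g * w = w * g) {x y : Ω} (hy : y ∈ M.orb x) :
    (W.orb y).ncard = (W.orb x).ncard := by
  have h1 := card_eq_orb_mul W x
  have h2 := card_eq_orb_mul W y
  have e : W.fixer {x} = W.fixer {y} := by
    ext w
    constructor
    · rintro ⟨hw, h⟩
      exact ⟨hw, by rintro _ rfl; exact fix_of_centralizes hWM hw (mem_orb_self _ _) (h x rfl) hy⟩
    · rintro ⟨hw, h⟩
      exact ⟨hw, by rintro _ rfl; exact fix_of_centralizes hWM hw hy (h y rfl) (mem_orb_self _ _)⟩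
  rw [← e, h1] at h2
  exact (Nat.eq_of_mul_eq_mul_right Nat.card_pos h2).symm

theorem IsMaxElem2.local_bound (hE : E.IsMaxElem2) (hWE : W ≤ E)
    (hcard : Nat.card E ≤ 4 * Nat.card W) {M : Subgroup (Perm Ω)} (hEM : E ≤ M)
    (hWM : ∀ w ∈ W, ∀ g ∈ M, g * w = w * g) (x : Ω) :
    2 ^ (M.orb x).ncard ≤ (4 * (W.orb x).ncard) * (4 * (W.orb x).ncard) ∧
    (2 ^ (M.orb x).ncard = (4 * (W.orb x).ncard) * (4 * (W.orb x).ncard) →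
      4 * Nat.card W ≤ Nat.card E ∧ ∀ g ∈ E, (∀ z ∈ M.orb x, g z = z) → g ∈ W) := by
  have hY : ∀ g ∈ E, ∀ z ∈ M.orb x, g z ∈ M.orb x := fun g hg => orb_mapsTo M x g (hEM hg)
  have h1 := hE.card_eq_mul hY
  have h2 := hE.card_fixer_sq hY
  have h3 := card_eq_orb_mul W x
  have e : W.fixer {x} = W.fixer (M.orb x) := by
    ext w
    constructor
    · rintro ⟨hw, h⟩
      exact ⟨hw, fun y hy => fix_of_centralizes hWM hw (mem_orb_self _ _) (h x rfl) hy⟩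
    · rintro ⟨hw, h⟩
      exact ⟨hw, by rintro _ rfl; exact h _ (mem_orb_self _ _)⟩
  rw [e] at h3
  have hle : W.fixer (M.orb x) ≤ E.fixer (M.orb x) := fun g hg => ⟨hWE hg.1, hg.2⟩
  have h4 : Nat.card (W.fixer (M.orb x)) ≤ Nat.card (E.fixer (M.orb x)) := card_le_of_le hle
  have hpos : 0 < Nat.card (E.fixer (M.orb x)) := Nat.card_pos
  have h5 : Nat.card (E.fixer (M.orb x)ᶜ) ≤ 4 * (W.orb x).ncard := by
    refine Nat.le_of_mul_le_mul_right ?_ hpos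
    calc _ = Nat.card E := h1.symm
      _ ≤ 4 * Nat.card W := hcard
      _ = 4 * (W.orb x).ncard * Nat.card (W.fixer (M.orb x)) := by rw [h3]; ring
      _ ≤ _ := Nat.mul_le_mul_left _ h4
  refine ⟨by rw [← h2]; exact Nat.mul_le_mul h5 h5, fun heq => ?_⟩
  rw [← h2] at heq
  have h6 := Nat.mul_self_inj.1 heq
  have hpos' : 0 < Nat.card (E.fixer (M.orb x)ᶜ) := Nat.card_pos
  have h7 : Nat.card (E.fixer (M.orb x)) ≤ Nat.card (W.fixer (M.orb x)) := by
    refine Nat.le_of_mul_le_mul_left ?_ hpos'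
    rw [← h1, h6]
    calc _ ≤ 4 * Nat.card W := hcard
      _ = _ := by rw [h3]; ring
  have h8 := eq_of_le_of_card_ge hle h7
  refine ⟨?_, fun g hg hz => ?_⟩
  · rw [h1, h6, h3, h8, mul_assoc]
  · have : g ∈ W.fixer (M.orb x) := by rw [h8]; exact ⟨hg, hz⟩
    exact this.1

theorem orb_eq_pair {P : Subgroup (Perm Ω)} {x : Ω} (h : (P.orb x).ncard = 2) :
    ∃ y, y ≠ x ∧ P.orb x = {x, y} := by
  obtain ⟨y, hy, hne⟩ := Set.exists_ne_of_one_lt_ncard (by omega : 1 < (P.orb x).ncard) x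
  refine ⟨y, hne, (Set.eq_of_subset_of_ncard_le ?_ ?_ (Set.toFinite _)).symm⟩
  · rintro z (rfl | rfl)
    · exact mem_orb_self _ _
    · exact hy
  · rw [h, Set.ncard_pair hne.symm]

theorem IsMaxElem2.type_cases (hE : E.IsMaxElem2) (hWE : W ≤ E)
    (hcard : Nat.card E ≤ 4 * Nat.card W) (hτ : τ * τ = 1) (hWτ : ∀ w ∈ W, τ * w = w * τ)
    (hn : ∃ g ∈ E, τ * g * τ ∉ E) :
    4 * Nat.card W ≤ Nat.card E ∧
    ((∃ x y x' y', IsTypeA E W τ x y x' y') ∨ ∃ O p q w, IsTypeB E W τ O p q w) := by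
  have hττ := apply_apply_of_mul_self hτ
  obtain ⟨x, a, haE, hsupp, hconj⟩ : ∃ x, ∃ a ∈ E, (∀ z ∉ E.orb x, a z = z) ∧ τ * a * τ ∉ E := by
    by_contra! hcon
    obtain ⟨g, hg, hg'⟩ := hn
    exact hg' (hE.conj_mem hτ (fun x a ha h => hcon x a ha h) g hg)
  obtain ⟨x₀, hx₀, hx₀'⟩ : ∃ z ∈ E.orb x, τ z ∉ E.orb x := by
    by_contra! hcon
    exact hconj (hE.conj_mem_of_orb_invariant hτ hcon haE hsupp)
  have horb₀ := orb_eq_of_mem hx₀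
  set M := closure ((E : Set (Perm Ω)) ∪ {τ}) with hM
  have hEM : E ≤ M := fun g hg => subset_closure (Or.inl hg)
  have hτM : τ ∈ M := subset_closure (Or.inr rfl)
  have hWM : ∀ w ∈ W, ∀ g ∈ M, g * w = w * g := by
    intro w hw g hg
    refine (commute_closure ?_ g hg).symm
    rintro a (ha | rfl)
    · exact hE.elem.comm (hWE hw) ha
    · exact (hWτ w hw).symm
  have hoM : E.orb x ⊆ M.orb x := by
    rintro _ ⟨g, hg, rfl⟩; exact ⟨g, hEM hg, rfl⟩
  have hYE : ∀ g ∈ E, ∀ z ∈ M.orb x, g z ∈ M.orb x := fun g hg => orb_mapsTo M x g (hEM hg)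
  have hYτ : ∀ z ∈ M.orb x, τ z ∈ M.orb x := orb_mapsTo M x τ hτM
  have hτx₀ : τ x₀ ∈ M.orb x := hYτ _ (hoM hx₀)
  obtain ⟨hb1, hb2⟩ := hE.local_bound hWE hcard hEM hWM x
  -- the size of the `W`-orbits on the linked set
  have hw : (W.orb x).ncard = 1 ∨ (W.orb x).ncard = 2 ∧
      ((E.orb x).ncard = 2 → (E.orb (τ x)).ncard = 4) := by
    have hWE' : ∀ z, W.orb z ⊆ E.orb z := by
      rintro z _ ⟨g, hg, rfl⟩; exact ⟨g, hWE hg, rfl⟩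
    have hlt : ∃ z ∈ ({x, τ x} : Set Ω), (W.orb z).ncard < (E.orb z).ncard := by
      by_contra! hcon
      refine hconj (hE.conj_mem_of_orb_eq hτ hWE hWτ ?_ ?_ haE hsupp)
      · exact Set.eq_of_subset_of_ncard_le (hWE' x) (hcon x (by simp)) (Set.toFinite _)
      · exact Set.eq_of_subset_of_ncard_le (hWE' _) (hcon (τ x) (by simp)) (Set.toFinite _)
    obtain ⟨z, hz, hlt⟩ := hlt
    have hzM : z ∈ M.orb x := by
      rcases hz with rfl | rfl
      · exact mem_orb_self _ _
      · exact hYτ _ (mem_orb_self _ _)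
    have h1 := ncard_orb_of_centralizes hWM hzM
    have h3 := (hE.elem.mono hWE).ncard_orb_ne_three x
    have h0 : 0 < (W.orb x).ncard := (Set.ncard_pos (Set.toFinite _)).2 ⟨x, mem_orb_self _ _⟩
    rcases hz with rfl | rfl
    · rcases hE.ncard_orb z with h2 | h2 <;> omega
    · rcases hE.ncard_orb (τ x) with h2 | h2 <;> omega
  have hoff : (∀ g ∈ E, (∀ z ∈ M.orb x, g z = z) → g ∈ W) → ∀ z ∉ M.orb x, τ z ∈ E.orb z := by
    intro hfW z hz
    obtain ⟨g, hg, hgz, hg'⟩ := hE.exists_restrict_apply_ne z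
    have hgW : g ∈ W := hfW g hg (fun u hu => hg' u (fun huz => hz (orb_subset hYE hu (by
      rw [orb_eq_of_mem huz]; exact mem_orb_self _ _))))
    by_contra hcon
    have h1 := hg' _ hcon
    have h2 := DFunLike.congr_fun (hWτ g hgW) z
    simp only [Perm.mul_apply] at h2
    rw [h1] at h2
    exact hgz (τ.injective h2)
  -- a union of two orbits inside the linked set
  have hunion : ∀ u v, u ∈ M.orb x → v ∈ M.orb x → v ∉ E.orb u →
      E.orb u ∪ E.orb v ⊆ M.orb x ∧
        (E.orb u ∪ E.orb v).ncard = (E.orb u).ncard + (E.orb v).ncard := by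
    intro u v hu hv huv
    refine ⟨Set.union_subset (orb_subset hYE hu) (orb_subset hYE hv), ?_⟩
    exact Set.ncard_union_eq (orb_disjoint huv) (Set.toFinite _) (Set.toFinite _)
  rcases hw with hw | ⟨hw, hw4⟩
  · rw [hw] at hb1 hb2
    have hY4 : (M.orb x).ncard ≤ 4 := by
      by_contra hcon
      have : 2 ^ 5 ≤ 2 ^ (M.orb x).ncard := Nat.pow_le_pow_right (by norm_num) (by omega)
      omega
    obtain ⟨hU, hUc⟩ := hunion x₀ (τ x₀) (hoM hx₀) hτx₀ (by rwa [horb₀])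
    have hUle := Set.ncard_le_ncard hU (Set.toFinite _)
    have hl := hE.ncard_orb x₀
    have hr := hE.ncard_orb (τ x₀)
    have hl2 : (E.orb x₀).ncard = 2 := by omega
    have hr2 : (E.orb (τ x₀)).ncard = 2 := by omega
    have hYeq : M.orb x = E.orb x₀ ∪ E.orb (τ x₀) :=
      (Set.eq_of_subset_of_ncard_le hU (by omega) (Set.toFinite _)).symm
    have hYc : (M.orb x).ncard = 4 := by rw [hYeq]; omega
    obtain ⟨hcW, hfW⟩ := hb2 (by rw [hYc]; norm_num)
    refine ⟨hcW, Or.inl ?_⟩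
    obtain ⟨y, hy, hyo⟩ := orb_eq_pair hl2
    obtain ⟨y', hy', hyo'⟩ := orb_eq_pair hr2
    have hYe : ∀ z, z ∈ M.orb x ↔ (z = x₀ ∨ z = y) ∨ (z = τ x₀ ∨ z = y') := by
      intro z; rw [hYeq, hyo, hyo']; rfl
    have hdis := orb_disjoint (P := E) (x := x₀) (y := τ x₀) (by rwa [horb₀])
    rw [hyo, hyo', Set.disjoint_left] at hdis
    have d1 : x₀ ≠ τ x₀ := fun h => hdis (a := x₀) (by simp) (by simp [← h])
    have d2 : y ≠ τ x₀ := fun h => hdis (a := y) (by simp) (by simp [h])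
    have d3 : x₀ ≠ y' := fun h => hdis (a := x₀) (by simp) (by simp [h])
    have d4 : y ≠ y' := fun h => hdis (a := y) (by simp) (by simp [h])
    have hτy : τ y = y ∨ τ y = y' := by
      have h1 := (hYe (τ y)).1 (hYτ y ((hYe y).2 (by simp)))
      rcases h1 with (h1 | h1) | (h1 | h1)
      · exact absurd (by rw [← h1, hττ]) d2
      · exact Or.inl h1
      · exact absurd (τ.injective h1) hy
      · exact Or.inr h1
    have hτy : τ y = y := by
      refine hτy.resolve_right fun hyy => hconj ?_
      have hax : a x₀ = y := by
        have h1 : a x₀ ∈ E.orb x₀ := apply_mem_orb haE _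
        rw [hyo] at h1
        refine h1.resolve_left fun h2 => hconj ?_
        have : a = 1 := by
          ext z
          by_cases hz : z ∈ E.orb x
          · exact hE.elem.fix_orb haE h2 (by rwa [horb₀])
          · exact hsupp z hz
        rw [this, mul_one, hτ]; exact E.one_mem
      have hay : a y = x₀ := by rw [← hax, hE.elem.apply_apply haE]
      obtain ⟨b, hbE, hbx, hb⟩ := hE.exists_restrict_apply_ne (τ x₀)
      have hbx' : b (τ x₀) = y' := by
        have h1 : b (τ x₀) ∈ E.orb (τ x₀) := apply_mem_orb hbE _
        rw [hyo'] at h1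
        exact h1.resolve_left hbx
      have hby : b y' = τ x₀ := by rw [← hbx', hE.elem.apply_apply hbE]
      have hτy' : τ y' = y := by rw [← hyy, hττ]
      suffices τ * a * τ = b by rw [this]; exact hbE
      ext z
      simp only [Perm.mul_apply]
      by_cases hz : z ∈ E.orb (τ x₀)
      · rw [hyo'] at hz
        rcases hz with rfl | rfl
        · rw [hττ, hax, hyy, hbx']
        · rw [hτy', hay, hby]
      · rw [hb z hz, hsupp, hττ]
        rw [← horb₀, hyo]
        rw [hyo'] at hz
        rintro (h1 | h1)
        · exact hz (by rw [← h1, hττ]; simp)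
        · rw [Set.mem_singleton_iff] at h1
          exact hz (by rw [← hττ z, h1, hyy]; simp)
    have hτy' : τ y' = y' := by
      have h1 := (hYe (τ y')).1 (hYτ y' ((hYe y').2 (by simp)))
      rcases h1 with (h1 | h1) | (h1 | h1)
      · exact absurd (by rw [← h1, hττ]) hy'
      · exact absurd (τ.injective (hτy.trans h1.symm)) d4
      · exact absurd (τ.injective h1).symm d3
      · exact h1
    have hWfix : ∀ w ∈ W, ∀ z ∈ M.orb x, w z = z := by
      intro w hw' z hz
      have h1 := ncard_orb_of_centralizes hWM hz
      rw [hw] at h1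
      obtain ⟨u, hu⟩ := Set.ncard_eq_one.1 h1
      have h2 : z ∈ W.orb z := mem_orb_self _ _
      have h3 : w z ∈ W.orb z := apply_mem_orb hw' _
      rw [hu] at h2 h3
      rw [h3, h2]
    refine ⟨x₀, y, τ x₀, y', hyo, hyo', hy.symm, hy'.symm, by rwa [horb₀], rfl, hτy, hτy',
      fun w hw => ⟨hWfix w hw _ (hoM hx₀), hWfix w hw _ hτx₀⟩, ?_, ?_⟩
    · intro g hg h1 h2
      refine hfW g hg fun z hz => ?_
      rw [hYeq] at hz
      rcases hz with hz | hz
      · exact hE.elem.fix_orb hg h1 hz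
      · exact hE.elem.fix_orb hg h2 hz
    · intro z hz1 hz2
      refine hoff hfW z ?_
      rw [hYeq]
      rintro (h | h)
      · exact hz1 h
      · exact hz2 h
  · rw [hw] at hb1 hb2
    have hY6 : (M.orb x).ncard ≤ 6 := by
      by_contra hcon
      have : 2 ^ 7 ≤ 2 ^ (M.orb x).ncard := Nat.pow_le_pow_right (by norm_num) (by omega)
      omega
    obtain ⟨u, p, hu, hp, hpu, hτp, hu4⟩ : ∃ u p, u ∈ M.orb x ∧ p ∈ M.orb x ∧ p ∉ E.orb u ∧
        τ p ∈ E.orb u ∧ (E.orb u).ncard = 4 := by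
      rcases hE.ncard_orb x with h | h
      · have h4 := hw4 h
        refine ⟨τ x, x, hYτ _ (mem_orb_self _ _), mem_orb_self _ _, fun hx => ?_,
          mem_orb_self _ _, h4⟩
        rw [orb_eq_of_mem hx] at h
        omega
      · exact ⟨x, τ x₀, mem_orb_self _ _, hτx₀, hx₀', by rwa [hττ], h⟩
    obtain ⟨hU, hUc⟩ := hunion u p hu hp hpu
    have hUle := Set.ncard_le_ncard hU (Set.toFinite _)
    have hr := hE.ncard_orb p
    have hp2 : (E.orb p).ncard = 2 := by omega
    have hYeq : M.orb x = E.orb u ∪ E.orb p :=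
      (Set.eq_of_subset_of_ncard_le hU (by omega) (Set.toFinite _)).symm
    have hYc : (M.orb x).ncard = 6 := by rw [hYeq]; omega
    obtain ⟨hcW, hfW⟩ := hb2 (by rw [hYc]; norm_num)
    refine ⟨hcW, Or.inr ?_⟩
    obtain ⟨q, hq, hpq⟩ := orb_eq_pair hp2
    rw [hpq] at hYeq
    have hp1 := ncard_orb_of_centralizes hWM hp
    obtain ⟨_, ⟨w, hwW, rfl⟩, hwp⟩ :=
      Set.exists_ne_of_one_lt_ncard (by omega : 1 < (W.orb p).ncard) p
    have hvp : ∀ v ∈ W, v p = p ∨ v p = q := by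
      intro v hv
      have : v p ∈ E.orb p := apply_mem_orb (hWE hv) _
      rwa [hpq] at this
    refine ⟨E.orb u, p, q, w, hu4, fun z hz => orb_eq_of_mem hz, hpq, hq.symm, hτp, hwW, ?_, ?_,
      ?_, ?_⟩
    · rw [← hYeq]
      exact fun z hz h => hwp (fix_of_centralizes hWM hwW hz h hp)
    · rw [← hYeq]
      intro v hv
      rcases hvp v hv with h | h
      · exact Or.inl fun z hz => fix_of_centralizes hWM hv hp h hz
      · right
        intro z hz
        have h1 := fix_of_centralizes hWM (W.mul_mem (W.inv_mem hwW) hv) hp (by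
          rw [Perm.mul_apply, h, ← (hvp w hwW).resolve_left hwp]; simp) hz
        rwa [Perm.mul_apply, Perm.inv_eq_iff_eq] at h1
    · rw [← hYeq]; exact hfW
    · rw [← hYeq]; exact hoff hfW

end Subgroup

/-- The subgroup generated by the members of a family with index in `J`. -/
abbrev genBy {G : Type*} [Group G] (s : ℕ → G) (J : Finset ℕ) : Subgroup G :=
  Subgroup.closure (s '' J)

theorem mem_genBy {G : Type*} [Group G] {s : ℕ → G} {J : Finset ℕ} {j : ℕ} (hj : j ∈ J) :
    s j ∈ genBy s J := Subgroup.subset_closure ⟨j, hj, rfl⟩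

theorem genBy_mono {G : Type*} [Group G] {s : ℕ → G} {J K : Finset ℕ} (h : J ⊆ K) :
    genBy s J ≤ genBy s K := Subgroup.closure_mono (Set.image_mono h)

theorem Set.ncard_pair_le {α : Type*} (a b : α) : ({a, b} : Set α).ncard ≤ 2 := by
  simpa using Set.ncard_insert_le a {b}

/-- Invariance under generators of a finite permutation group. -/
theorem Subgroup.closure_mapsTo {Ω : Type*} [Finite Ω] {A : Set (Perm Ω)} {S : Set Ω}
    (h : ∀ a ∈ A, ∀ z ∈ S, a z ∈ S) : ∀ g ∈ closure A, ∀ z ∈ S, g z ∈ S := by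
  intro g hg
  induction hg using closure_induction with
  | mem a ha => exact h a ha
  | one => exact fun z hz => hz
  | mul a b _ _ ha hb => exact fun z hz => ha _ (hb _ hz)
  | inv a _ ha =>
    intro z hz
    have himg : a '' S = S := Set.eq_of_subset_of_ncard_le (by rintro _ ⟨y, hy, rfl⟩; exact ha y hy)
      (by rw [Set.ncard_image_of_injective _ a.injective]) (Set.toFinite _)
    rw [← himg] at hz
    obtain ⟨y, hy, rfl⟩ := hz
    simpa using hy

/-- A string of `2 N - 1` involutions on `2 N` points, alternately `s 0, t 0, s 1, t 1, …`, whose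
even members generate an elementary abelian group of the largest possible order. -/
structure IsMaxString {Ω : Type*} (N : ℕ) (s t : ℕ → Perm Ω) : Prop where
  card : Nat.card Ω = 2 * N
  four_le : 4 ≤ N
  s_sq : ∀ j < N, s j * s j = 1
  s_comm : ∀ i < N, ∀ j < N, s i * s j = s j * s i
  s_card : Nat.card (genBy s (Finset.range N)) = 2 ^ N
  t_sq : ∀ k, k + 1 < N → t k * t k = 1
  t_comm : ∀ k, k + 1 < N → ∀ l, l + 1 < N → t k * t l = t l * t k
  ts_comm : ∀ k, k + 1 < N → ∀ j < N, j ≠ k → j ≠ k + 1 → t k * s j = s j * t k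
  not_norm : ∀ k, k + 1 < N →
    ∃ g ∈ genBy s (Finset.range N), t k * g * t k ∉ genBy s (Finset.range N)
  trans : ∀ S : Set Ω, S.Nonempty → (∀ j < N, ∀ z ∈ S, s j z ∈ S) →
    (∀ k, k + 1 < N → ∀ z ∈ S, t k z ∈ S) → S = Set.univ

namespace IsMaxString

open Subgroup

variable {Ω : Type*} {N : ℕ} {s t : ℕ → Perm Ω}

theorem isMaxElem2 (h : IsMaxString N s t) : (genBy s (Finset.range N)).IsMaxElem2 where
  elem := IsElem2.closure_image (by simpa using h.s_sq) (by
    intro i hi j hj; exact h.s_comm i (by simpa using hi) j (by simpa using hj))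
  card_sq := by rw [h.s_card, h.card, two_mul, pow_add]

/-- The part of the even group that must commute with `t k`. -/
def W (N : ℕ) (s : ℕ → Perm Ω) (k : ℕ) : Subgroup (Perm Ω) :=
  genBy s (((Finset.range N).erase k).erase (k + 1))

theorem W_le (k : ℕ) : W N s k ≤ genBy s (Finset.range N) :=
  genBy_mono (by intro j hj; simp at hj ⊢; omega)

theorem mem_W {k j : ℕ} (hj : j < N) (h1 : j ≠ k) (h2 : j ≠ k + 1) : s j ∈ W N s k :=
  mem_genBy (by simp; omega)

theorem mem_W_or (h : IsMaxString N s t) {k e : ℕ} (he : e < N)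
    {K : Finset ℕ} (hK : ∀ j ∈ K, j < N ∧ (j = e ∨ j ≠ k ∧ j ≠ k + 1)) {g : Perm Ω}
    (hg : g ∈ genBy s K) : g ∈ W N s k ∨ s e * g ∈ W N s k := by
  refine (IsElem2.mem_sup_iff (commute_closure ?_) (h.s_sq e he)).1 ?_
  · rintro _ ⟨j, hj, rfl⟩
    exact h.s_comm e he j (by simp at hj; omega)
  · refine (Subgroup.closure_le _).2 ?_ hg
    rintro _ ⟨j, hj, rfl⟩
    obtain ⟨hjN, rfl | ⟨h1, h2⟩⟩ := hK j hj
    · exact mem_sup_right (subset_closure rfl)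
    · exact mem_sup_left (mem_W hjN h1 h2)

variable [Finite Ω]

theorem s_notMem (h : IsMaxString N s t) {i : ℕ} (hi : i < N) :
    s i ∉ genBy s ((Finset.range N).erase i) := by
  intro hmem
  have h1 : genBy s (Finset.range N) ≤ genBy s ((Finset.range N).erase i) := by
    rw [Subgroup.closure_le]
    rintro _ ⟨j, hj, rfl⟩
    by_cases hji : j = i
    · rw [hji]; exact hmem
    · exact mem_genBy (Finset.mem_erase.2 ⟨hji, hj⟩)
  have h2 := Subgroup.card_le_of_le h1
  have h3 : Nat.card (genBy s ((Finset.range N).erase i)) ≤ 2 ^ ((Finset.range N).erase i).card :=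
    card_closure_image_le
      (fun j hj => h.s_sq j (by simp at hj; omega))
      (fun j hj k hk => h.s_comm j (by simp at hj; omega) k (by simp at hk; omega))
  rw [Finset.card_erase_of_mem (by simpa using hi), Finset.card_range] at h3
  rw [h.s_card] at h2
  have : 2 ^ (N - 1) < 2 ^ N := Nat.pow_lt_pow_right (by norm_num) (by omega)
  omega

theorem card_le (h : IsMaxString N s t) {k : ℕ} (hk : k + 1 < N) :
    Nat.card (genBy s (Finset.range N)) ≤ 4 * Nat.card (W N s k) := by
  have e1 : Finset.range N = insert k ((Finset.range N).erase k) :=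
    (Finset.insert_erase (by simp; omega)).symm
  have e2 : (Finset.range N).erase k = insert (k + 1) (((Finset.range N).erase k).erase (k + 1)) :=
    (Finset.insert_erase (by simp; omega)).symm
  have h1 : Nat.card (genBy s (Finset.range N)) ≤
      2 * Nat.card (genBy s ((Finset.range N).erase k)) := by
    conv_lhs => rw [e1]
    rw [genBy, Finset.coe_insert, closure_image_insert]
    refine IsElem2.card_sup_le (commute_closure ?_) (h.s_sq k (by omega))
    rintro _ ⟨j, hj, rfl⟩
    exact h.s_comm k (by omega) j (by simp at hj; omega)
  have h2 : Nat.card (genBy s ((Finset.range N).erase k)) ≤ 2 * Nat.card (W N s k) := by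
    conv_lhs => rw [e2]
    rw [genBy, Finset.coe_insert, closure_image_insert]
    refine IsElem2.card_sup_le (commute_closure ?_) (h.s_sq (k + 1) (by omega))
    rintro _ ⟨j, hj, rfl⟩
    exact h.s_comm (k + 1) (by omega) j (by simp at hj; omega)
  omega

theorem type_cases (h : IsMaxString N s t) {k : ℕ} (hk : k + 1 < N) :
    (∃ x y x' y', IsTypeA (genBy s (Finset.range N)) (W N s k) (t k) x y x' y') ∨
    ∃ O p q w, IsTypeB (genBy s (Finset.range N)) (W N s k) (t k) O p q w := by
  refine (h.isMaxElem2.type_cases (W_le k) (h.card_le hk) (h.t_sq k hk)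
    (commute_closure ?_) (h.not_norm k hk)).2
  rintro _ ⟨j, hj, rfl⟩
  simp at hj
  exact h.ts_comm k hk j (by omega) (by omega) (by omega)

theorem typeB_adjacent (h : IsMaxString N s t) {k l : ℕ} (hk : k + 1 < N) (hl : l + 1 < N)
    (hkl : l = k + 1 ∨ k = l + 1) {O : Set Ω} {p q : Ω} {w : Perm Ω}
    (hB : IsTypeB (genBy s (Finset.range N)) (W N s k) (t k) O p q w) :
    ∃ p' q' w', IsTypeB (genBy s (Finset.range N)) (W N s l) (t l) O p' q' w' := by
  have hE := h.isMaxElem2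
  set E := genBy s (Finset.range N) with hEdef
  obtain ⟨u, hu⟩ : O.Nonempty := Set.nonempty_of_ncard_ne_zero (by rw [hB.ncard]; norm_num)
  have hnot : ¬ ∀ g ∈ E, (∀ z ∉ O, g z = z) → g ∈ W N s l := by
    intro hall
    have hpO : p ∉ O := by
      intro hp
      have h1 := hB.ncard
      rw [← hB.orb p hp, hB.orb_pair, Set.ncard_pair hB.ne] at h1
      omega
    have htriv : ∀ g ∈ W N s k, (∀ z ∉ O, g z = z) → g = 1 := by
      intro g hg hz
      ext z
      by_cases hzO : z ∈ O
      · rcases hB.eq_on g hg with h1 | h1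
        · exact h1 z (Or.inl hzO)
        · exact absurd ((h1 p (by simp)).symm.trans (hz p hpO)) (hB.w_ne p (by simp))
      · exact hz z hzO
    have hcard := hE.card_fixer_orb u
    rw [hB.orb u hu, hB.ncard] at hcard
    have hcard' : ((E.fixer Oᶜ : Subgroup (Perm Ω)) : Set (Perm Ω)).ncard = 4 := hcard
    obtain ⟨g, hg, hg1⟩ := Set.exists_ne_of_one_lt_ncard
      (by omega : 1 < ((E.fixer Oᶜ : Subgroup (Perm Ω)) : Set (Perm Ω)).ncard) 1
    obtain ⟨f, hf, hf1⟩ := Set.exists_mem_notMem_of_ncard_lt_ncard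
      (s := ({1, g} : Set (Perm Ω))) (t := ((E.fixer Oᶜ : Subgroup (Perm Ω)) : Set (Perm Ω)))
      (by rw [Set.ncard_pair (Ne.symm hg1)]; omega)
    simp only [Set.mem_insert_iff, Set.mem_singleton_iff, not_or] at hf1
    obtain ⟨e, he, hK⟩ : ∃ e < N, ∀ j ∈ ((Finset.range N).erase l).erase (l + 1),
        j < N ∧ (j = e ∨ j ≠ k ∧ j ≠ k + 1) := by
      rcases hkl with rfl | rfl
      · exact ⟨k, by omega, fun j hj => by simp at hj; omega⟩
      · exact ⟨l + 2, by omega, fun j hj => by simp at hj; omega⟩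
    have key : ∀ a ∈ E.fixer Oᶜ, a ≠ 1 → s e * a ∈ W N s k := by
      intro a ha ha1
      refine (h.mem_W_or he hK (hall a ha.1 ha.2)).resolve_left fun h1 => ?_
      exact ha1 (htriv a h1 ha.2)
    have h1 := mul_mem (inv_mem (key g hg hg1)) (key f hf hf1.1)
    rw [show (s e * g)⁻¹ * (s e * f) = g⁻¹ * f by group] at h1
    have hgf : g⁻¹ * f ∈ E.fixer Oᶜ := mul_mem (inv_mem hg) hf
    have h2 := htriv _ h1 hgf.2
    exact hf1.2 (inv_mul_eq_one.1 h2).symm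
  have hpair : ∀ x y, E.orb x = {x, y} → x ∉ O := by
    intro x y hxy hx
    have h1 := hB.ncard
    rw [← hB.orb x hx, hxy] at h1
    have := Set.ncard_pair_le x y
    omega
  rcases h.type_cases hl with ⟨x, y, x', y', hA⟩ | ⟨O', p', q', w', hB'⟩
  · exact absurd (fun g hg hz => hA.mem g hg (hz _ (hpair _ _ hA.orb_left))
      (hz _ (hpair _ _ hA.orb_right))) hnot
  · by_cases hO : O' = O
    · rw [hO] at hB'; exact ⟨p', q', w', hB'⟩
    · refine absurd (fun g hg hz => hB'.mem g hg ?_) hnot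
      intro z hz'
      refine hz z fun hzO => ?_
      rcases hz' with h1 | h1
      · exact hO (by rw [← hB'.orb z h1, hB.orb z hzO])
      · have hz2 : z ∈ E.orb p' := by rw [hB'.orb_pair]; exact h1
        have h3 := hB.ncard
        rw [← hB.orb z hzO, orb_eq_of_mem hz2, hB'.orb_pair] at h3
        have := Set.ncard_pair_le p' q'
        omega

theorem typeB_false_of_two (h : IsMaxString N s t) {k : ℕ} (hk : k + 3 < N) {O : Set Ω}
    {p q p' q' : Ω} {w w' : Perm Ω}
    (hB : IsTypeB (genBy s (Finset.range N)) (W N s k) (t k) O p q w)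
    (hB' : IsTypeB (genBy s (Finset.range N)) (W N s (k + 2)) (t (k + 2)) O p' q' w') : False := by
  have hE := h.isMaxElem2
  set E := genBy s (Finset.range N) with hEdef
  obtain ⟨u₀, hu₀⟩ : O.Nonempty := Set.nonempty_of_ncard_ne_zero (by rw [hB.ncard]; norm_num)
  have hwE : w ∈ E := W_le k hB.mem_w
  have hwE' : w' ∈ E := W_le (k + 2) hB'.mem_w
  have hww : ∀ z, w (w z) = z := hE.elem.apply_apply hwE
  have hww' : ∀ z, w' (w' z) = z := hE.elem.apply_apply hwE'
  have hwO : ∀ g ∈ E, ∀ z ∈ O, g z ∈ O := by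
    intro g hg z hz
    have := apply_mem_orb hg z
    rwa [hB.orb z hz] at this
  have hgen : ∀ j < N, s j ∈ W N s k ∨ s j ∈ W N s (k + 2) := by
    intro j hj
    by_cases h1 : j = k ∨ j = k + 1
    · exact Or.inr (mem_W hj (by omega) (by omega))
    · exact Or.inl (mem_W hj (by omega) (by omega))
  have hne : ∀ u ∈ O, w u ≠ w' u := by
    intro u hu heq
    have hinv : ∀ g ∈ E, ∀ z ∈ ({u, w u} : Set Ω), g z ∈ ({u, w u} : Set Ω) := by
      refine closure_mapsTo ?_
      rintro _ ⟨j, hj, rfl⟩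
      have hj' : j < N := by simpa using hj
      have hwu := hwO w hwE u hu
      rcases hgen j hj' with hj1 | hj1
      · rcases hB.eq_on _ hj1 with h1 | h1
        · rintro z (rfl | rfl)
          · rw [h1 z (Or.inl hu)]; simp
          · rw [h1 _ (Or.inl hwu)]; simp
        · rintro z (rfl | rfl)
          · rw [h1 z (Or.inl hu)]; simp
          · rw [h1 _ (Or.inl hwu), hww]; simp
      · rcases hB'.eq_on _ hj1 with h1 | h1
        · rintro z (rfl | rfl)
          · rw [h1 z (Or.inl hu)]; simp
          · rw [h1 _ (Or.inl hwu)]; simp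
        · rintro z (rfl | rfl)
          · rw [h1 z (Or.inl hu), heq]; simp
          · rw [h1 _ (Or.inl hwu), heq, hww']; simp
    have h1 := Set.ncard_le_ncard (orb_subset hinv (x := u) (by simp)) (Set.toFinite _)
    rw [hB.orb u hu, hB.ncard] at h1
    have := Set.ncard_pair_le u (w u)
    omega
  have hO4 : ∀ u ∈ O, O = {u, w u, w' u, w (w' u)} := by
    intro u hu
    have n1 := hB.w_ne u (Or.inl hu)
    have n2 := hB'.w_ne u (Or.inl hu)
    have n3 := hne u hu
    have n4 : w (w' u) ≠ u := fun e => n3 (by rw [← hww (w' u), e])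
    have n5 : w (w' u) ≠ w u := fun e => n2 (w.injective e)
    have n6 : w (w' u) ≠ w' u := hB.w_ne _ (Or.inl (hwO w' hwE' u hu))
    refine (Set.eq_of_subset_of_ncard_le ?_ ?_ (Set.toFinite _)).symm
    · rintro z (rfl | rfl | rfl | rfl)
      · exact hu
      · exact hwO w hwE _ hu
      · exact hwO w' hwE' _ hu
      · exact hwO w hwE _ (hwO w' hwE' _ hu)
    · rw [hB.ncard, Set.ncard_insert_of_notMem, Set.ncard_insert_of_notMem,
        Set.ncard_pair n6.symm]
      · simp [n3, n5.symm]
      · simp [n1.symm, n2.symm, n4.symm]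
  have hpairO : ∀ z ∈ O, z ∉ E.orb p ∧ z ∉ E.orb p' := by
    intro z hz
    have h1 := hB.ncard
    rw [← hB.orb z hz] at h1
    constructor
    · intro h2
      rw [orb_eq_of_mem h2, hB.orb_pair] at h1
      have := Set.ncard_pair_le p q
      omega
    · intro h2
      rw [orb_eq_of_mem h2, hB'.orb_pair] at h1
      have := Set.ncard_pair_le p' q'
      omega
  -- the two pairs are different orbits
  have hpp : E.orb p ≠ E.orb p' := by
    intro heq
    have hYY : (O ∪ {p, q} : Set Ω) = O ∪ {p', q'} := by rw [← hB.orb_pair, ← hB'.orb_pair, heq]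
    have hnot : ∀ i < N, ∀ K : Finset ℕ, (∀ j ∈ K, j < N ∧ j ≠ i) → s i ∉ genBy s K := by
      intro i hi K hK hmem
      refine h.s_notMem hi (genBy_mono ?_ hmem)
      intro j hj; have := hK j hj; simp; omega
    have hfin : ∀ g ∈ W N s (k + 2), g ∉ W N s k → ∀ z ∈ O ∪ {p', q'}, g z = w' z := by
      intro g hg hg'
      refine (hB'.eq_on g hg).resolve_left fun h1 => hg' (hB.mem g (W_le _ hg) ?_)
      rwa [hYY]
    have hk0 : s k ∈ W N s (k + 2) := mem_W (by omega) (by omega) (by omega)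
    have hk1 : s (k + 1) ∈ W N s (k + 2) := mem_W (by omega) (by omega) (by omega)
    have f0 := hfin _ hk0 (hnot k (by omega) _ (fun j hj => by simp at hj; omega))
    have f1 := hfin _ hk1 (hnot (k + 1) (by omega) _ (fun j hj => by simp at hj; omega))
    have hprod : s k * s (k + 1) ∈ W N s k := by
      refine hB.mem _ (mul_mem (W_le _ hk0) (W_le _ hk1)) ?_
      rw [hYY]
      intro z hz
      have hz' : w' z ∈ O ∪ {p', q'} := by
        rcases hz with hz | hz
        · exact Or.inl (hwO w' hwE' z hz)
        · right; rw [← hB'.orb_pair] at hz ⊢; exact orb_invariant hwE' hz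
      rw [Perm.mul_apply, f1 z hz, f0 _ hz', hww']
    refine h.s_notMem (i := k) (by omega) ?_
    have h1 : s k * s (k + 1) ∈ genBy s ((Finset.range N).erase k) :=
      genBy_mono (Finset.erase_subset _ _) hprod
    have h2 : s (k + 1) ∈ genBy s ((Finset.range N).erase k) := mem_genBy (by simp; omega)
    have h3 := mul_mem h1 (inv_mem h2)
    rwa [mul_inv_cancel_right] at h3
  -- final contradiction
  have htt := apply_apply_of_mul_self (h.t_sq (k + 2) (by omega))
  have hcomm : ∀ j l (hj : j + 1 < N), ∀ v ∈ W N s j, l = t j → ∀ z, l (v z) = v (l z) := by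
    intro j l hj v hv hl z
    subst hl
    refine DFunLike.congr_fun (commute_closure ?_ v hv : t j * v = v * t j) z
    rintro _ ⟨i, hi, rfl⟩
    simp at hi
    exact h.ts_comm j hj i (by omega) (by omega) (by omega)
  have hta : ∀ a ∈ E.orb p, t k a ∈ O := by
    intro a ha
    rw [hB.orb_pair] at ha
    rcases ha with rfl | rfl
    · exact hB.apply_pair
    · have hwp : w p = a := by
        have h1 : w p ∈ E.orb p := apply_mem_orb hwE _
        rw [hB.orb_pair] at h1
        exact h1.resolve_left (hB.w_ne p (by simp))
      rw [← hwp, hcomm k _ (by omega) w hB.mem_w rfl]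
      exact hwO w hwE _ hB.apply_pair
  have hpres : ∀ a ∈ E.orb p, t (k + 2) a ∈ E.orb p := by
    intro a ha
    have hoa := orb_eq_of_mem ha
    rw [← hoa]
    refine hB'.off a ?_
    rintro (h1 | h1)
    · exact (hpairO a h1).1 ha
    · rw [← hB'.orb_pair] at h1
      exact hpp (by rw [← hoa, orb_eq_of_mem h1])
  have hmeet : ∃ a ∈ E.orb p, ∃ b ∈ E.orb p', t k a = t (k + 2) b := by
    have hwp : w p ∈ E.orb p := apply_mem_orb hwE _
    have hwp' : w' p' ∈ E.orb p' := apply_mem_orb hwE' _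
    have c1 := hcomm k _ (by omega) w hB.mem_w rfl p
    have c2 := hcomm (k + 2) _ (by omega) w' hB'.mem_w rfl p'
    have hv := hB'.apply_pair
    rw [hO4 _ hB.apply_pair] at hv
    rcases hv with hv | hv | hv | hv
    · exact ⟨p, mem_orb_self _ _, p', mem_orb_self _ _, hv.symm⟩
    · exact ⟨w p, hwp, p', mem_orb_self _ _, by rw [c1, hv]⟩
    · exact ⟨p, mem_orb_self _ _, w' p', hwp', by rw [c2, hv, hww']⟩
    · refine ⟨w p, hwp, w' p', hwp', ?_⟩
      have hc : w' (w (w' (t k p))) = w (w' (w' (t k p))) :=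
        DFunLike.congr_fun (hE.elem.comm hwE' hwE) _
      rw [c1, c2, Set.mem_singleton_iff.1 hv, hc, hww']
  obtain ⟨a, ha, b, hb, hab⟩ := hmeet
  have h1 : t (k + 2) (t k a) = b := by rw [hab, htt]
  have h2 : t (k + 2) (t k a) = t k (t (k + 2) a) :=
    DFunLike.congr_fun (h.t_comm (k + 2) (by omega) k (by omega)) a
  have h3 := hta _ (hpres a ha)
  rw [← h2, h1] at h3
  exact (hpairO b h3).2 hb

theorem typeA (h : IsMaxString N s t) {k : ℕ} (hk : k + 1 < N) :
    ∃ x y x' y', IsTypeA (genBy s (Finset.range N)) (W N s k) (t k) x y x' y' := by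
  refine (h.type_cases hk).resolve_right ?_
  rintro ⟨O, p, q, w, hB⟩
  have h4 := h.four_le
  by_cases h1 : k + 3 < N
  · obtain ⟨_, _, _, hB1⟩ := h.typeB_adjacent (l := k + 1) hk (by omega) (by omega) hB
    obtain ⟨_, _, _, hB2⟩ := h.typeB_adjacent (l := k + 2) (by omega) (by omega) (by omega) hB1
    exact h.typeB_false_of_two h1 hB hB2
  · obtain ⟨l, rfl⟩ : ∃ l, k = l + 1 := ⟨k - 1, by omega⟩
    obtain ⟨_, _, _, hB1⟩ := h.typeB_adjacent (l := l) hk (by omega) (by omega) hB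
    by_cases h2 : l = 0
    · subst h2
      obtain ⟨_, _, _, hB2⟩ := h.typeB_adjacent (l := 2) hk (by omega) (by omega) hB
      exact h.typeB_false_of_two (k := 0) (by omega) hB1 hB2
    · obtain ⟨i, rfl⟩ : ∃ i, l = i + 1 := ⟨l - 1, by omega⟩
      obtain ⟨_, _, _, hB2⟩ := h.typeB_adjacent (l := i) (by omega) (by omega) (by omega) hB1
      exact h.typeB_false_of_two (k := i) (by omega) hB2 hB

end IsMaxString

namespace Subgroup

theorem IsTypeA.symm {Ω : Type*} {E W : Subgroup (Perm Ω)} {τ : Perm Ω} {x y x' y' : Ω}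
    (h : IsTypeA E W τ x y x' y') (hτ : τ * τ = 1) : IsTypeA E W τ x' y' x y where
  orb_left := h.orb_right
  orb_right := h.orb_left
  ne_left := h.ne_right
  ne_right := h.ne_left
  notMem := fun hx => h.notMem (by rw [orb_eq_of_mem hx]; exact mem_orb_self _ _)
  apply_left := by rw [← h.apply_left, apply_apply_of_mul_self hτ]
  fix_left := h.fix_right
  fix_right := h.fix_left
  fix := fun w hw => (h.fix w hw).symm
  mem := fun g hg h1 h2 => h.mem g hg h2 h1
  off := fun z h1 h2 => h.off z h2 h1

theorem IsElem2.isSwap {Ω : Type*} [Finite Ω] [DecidableEq Ω] {E : Subgroup (Perm Ω)}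
    (hE : E.IsElem2) {g : Perm Ω} (hg : g ∈ E) (h1 : g ≠ 1) {c : Ω} (hc : (E.orb c).ncard = 2)
    (hsupp : ∀ z ∉ E.orb c, g z = z) : g.IsSwap := by
  obtain ⟨y, hy, ho⟩ := orb_eq_pair hc
  have hgc : g c = y := by
    have h2 : g c ∈ E.orb c := apply_mem_orb hg c
    rw [ho] at h2
    refine h2.resolve_left fun h3 => h1 (Equiv.ext fun z => ?_)
    by_cases hz : z ∈ E.orb c
    · exact hE.fix_orb hg h3 hz
    · exact hsupp z hz
  refine ⟨c, y, hy.symm, Equiv.ext fun z => ?_⟩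
  by_cases hz : z ∈ E.orb c
  · rw [ho] at hz
    rcases hz with rfl | rfl
    · rw [hgc, swap_apply_left]
    · rw [swap_apply_right, ← hgc, hE.apply_apply hg]
  · rw [hsupp z hz]
    rw [ho] at hz
    simp only [Set.mem_insert_iff, Set.mem_singleton_iff, not_or] at hz
    rw [swap_apply_of_ne_of_ne hz.1 hz.2]

end Subgroup

namespace IsMaxString

open Subgroup

variable {Ω : Type*} {N : ℕ} {s t : ℕ → Perm Ω}

theorem reverse (h : IsMaxString N s t) :
    IsMaxString N (fun j => s (N - 1 - j)) (fun k => t (N - 2 - k)) := by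
  have h4 := h.four_le
  have e : genBy (fun j => s (N - 1 - j)) (Finset.range N) = genBy s (Finset.range N) := by
    refine le_antisymm ((closure_le _).2 ?_) ((closure_le _).2 ?_)
    · rintro _ ⟨j, hj, rfl⟩
      exact mem_genBy (by simp at hj ⊢; omega)
    · rintro _ ⟨j, hj, rfl⟩
      have hj' : j < N := by simpa using hj
      have h1 : (fun j => s (N - 1 - j)) (N - 1 - j) ∈
          genBy (fun j => s (N - 1 - j)) (Finset.range N) := mem_genBy (by simp; omega)
      simpa [show N - 1 - (N - 1 - j) = j by omega] using h1
  exact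
  { card := h.card
    four_le := h4
    s_sq := fun j hj => h.s_sq _ (by omega)
    s_comm := fun i hi j hj => h.s_comm _ (by omega) _ (by omega)
    s_card := by rw [e]; exact h.s_card
    t_sq := fun k hk => h.t_sq _ (by omega)
    t_comm := fun k hk l hl => h.t_comm _ (by omega) _ (by omega)
    ts_comm := fun k hk j hj h1 h2 => h.ts_comm _ (by omega) _ (by omega) (by omega) (by omega)
    not_norm := fun k hk => by rw [e]; exact h.not_norm _ (by omega)
    trans := fun S hS h1 h2 => h.trans S hS
      (fun j hj z hz => by
        have := h1 (N - 1 - j) (by omega) z hz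
        rwa [show N - 1 - (N - 1 - j) = j by omega] at this)
      (fun k hk z hz => by
        have := h2 (N - 2 - k) (by omega) z hz
        rwa [show N - 2 - (N - 2 - k) = k by omega] at this) }

variable [Finite Ω] [DecidableEq Ω]

theorem isSwap_left (h : IsMaxString N s t) :
    (s 0).IsSwap ∧ ((s 1).IsSwap ∨ (s 1 * s 0).IsSwap) ∧
    (∀ j, 2 ≤ j → j + 3 ≤ N → (s j).IsSwap) ∧ ∀ k, k + 1 < N → (t k).IsSwap := by
  have h4 := h.four_le
  have hE := h.isMaxElem2
  have : Nonempty Ω := (Nat.card_pos_iff.1 (by rw [h.card]; omega)).1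
  have hA' := fun k (hk : k + 1 < N) => h.typeA hk
  choose! x y x' y' hA using hA'
  set E := genBy s (Finset.range N) with hEdef
  have hsE : ∀ j < N, s j ∈ E := fun j hj => mem_genBy (by simpa using hj)
  set Z : ℕ → Set Ω := fun k => E.orb (x k) ∪ E.orb (x' k) with hZ
  have hZorb : ∀ k z, z ∈ Z k → E.orb z ⊆ Z k := by
    rintro k z (hz | hz)
    · rw [orb_eq_of_mem hz]; exact Set.subset_union_left
    · rw [orb_eq_of_mem hz]; exact Set.subset_union_right
  have hZ2 : ∀ k, k + 1 < N → ∀ z ∈ Z k, (E.orb z).ncard = 2 := by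
    rintro k hk z (hz | hz)
    · rw [orb_eq_of_mem hz, (hA k hk).orb_left, Set.ncard_pair (hA k hk).ne_left]
    · rw [orb_eq_of_mem hz, (hA k hk).orb_right, Set.ncard_pair (hA k hk).ne_right]
  have hsfix : ∀ k, k + 1 < N → ∀ j < N, j ≠ k → j ≠ k + 1 → ∀ z ∈ Z k, s j z = z := by
    rintro k hk j hj h1 h2 z hz
    have h3 := (hA k hk).fix _ (mem_W hj h1 h2)
    rcases hz with hz | hz
    · exact hE.elem.fix_orb (hsE j hj) h3.1 hz
    · exact hE.elem.fix_orb (hsE j hj) h3.2 hz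
  have hZE : ∀ k, ∀ g ∈ E, ∀ z ∈ Z k, g z ∈ Z k := fun k g hg z hz =>
    hZorb k z hz (apply_mem_orb hg z)
  have hZτ : ∀ k, k + 1 < N → ∀ z ∈ Z k, t k z ∈ Z k := by
    intro k hk
    have ha := hA k hk
    have hb := ha.symm (h.t_sq k hk)
    rintro z (hz | hz)
    · rw [ha.orb_left] at hz
      rcases hz with rfl | rfl
      · right; rw [ha.apply_left]; exact mem_orb_self _ _
      · left; rw [ha.fix_left, ha.orb_left]; simp
    · rw [ha.orb_right] at hz
      rcases hz with rfl | rfl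
      · left; rw [hb.apply_left]; exact mem_orb_self _ _
      · right; rw [ha.fix_right, ha.orb_right]; simp
  have hoff : ∀ k, k + 1 < N → ∀ z ∉ Z k, t k z ∈ E.orb z := fun k hk z hz =>
    (hA k hk).off z (fun h => hz (Or.inl h)) (fun h => hz (Or.inr h))
  have hne : ∀ k, (Z k).Nonempty := fun k => ⟨x k, Or.inl (mem_orb_self _ _)⟩
  have hdisj : ∀ k l, k + 1 < N → l + 1 < N → (k + 1 < l ∨ l + 1 < k) → ∀ z ∈ Z k, z ∉ Z l := by
    intro k l hk hl hkl z hz hz'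
    have hfix : ∀ g ∈ E, ∀ u ∈ ({z} : Set Ω), g u ∈ ({z} : Set Ω) := by
      refine closure_mapsTo ?_
      rintro _ ⟨j, hj, rfl⟩ u rfl
      have hj' : j < N := by simpa using hj
      by_cases h1 : j ≠ k ∧ j ≠ k + 1
      · exact hsfix k hk j hj' h1.1 h1.2 _ hz
      · exact hsfix l hl j hj' (by omega) (by omega) _ hz'
    have h1 := Set.ncard_le_ncard (orb_subset hfix (x := z) rfl) (Set.toFinite _)
    rw [hZ2 k hk z hz, Set.ncard_singleton] at h1
    omega
  have hcover : ∀ z, ∃ k, k + 1 < N ∧ z ∈ Z k := by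
    have := h.trans {z | ∃ k, k + 1 < N ∧ z ∈ Z k}
      ⟨x 0, 0, by omega, Or.inl (mem_orb_self _ _)⟩
      (by rintro j hj z ⟨k, hk, hz⟩; exact ⟨k, hk, hZE k _ (hsE j hj) z hz⟩)
      (by
        rintro l hl z ⟨k, hk, hz⟩
        by_cases hzl : z ∈ Z l
        · exact ⟨l, hl, hZτ l hl z hzl⟩
        · exact ⟨k, hk, hZorb k z hz (hoff l hl z hzl)⟩)
    intro z
    have hz : z ∈ {z | ∃ k, k + 1 < N ∧ z ∈ Z k} := by rw [this]; trivial
    exact hz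
  have htfix : ∀ k, k + 1 < N → ∀ z ∉ Z k, t k z = z := by
    intro k hk
    have key : ∀ l, l + 1 < N → ∀ x y x' y', IsTypeA E (W N s l) (t l) x y x' y' →
        t k x = y → False := by
      intro l hl x y x' y' ha hxy
      have hc := DFunLike.congr_fun (h.t_comm l hl k hk) y
      simp only [Perm.mul_apply] at hc
      rw [ha.fix_left, ← hxy, apply_apply_of_mul_self (h.t_sq k hk), ha.apply_left] at hc
      exact ha.notMem (by rw [hc]; exact mem_orb_self _ _)
    have key2 : ∀ l, l + 1 < N → ∀ x y x' y', IsTypeA E (W N s l) (t l) x y x' y' →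
        ∀ z ∈ E.orb x, z ∉ Z k → t k z = z := by
      intro l hl x y x' y' ha z hz hzk
      have h1 := hoff k hk z hzk
      rw [orb_eq_of_mem hz, ha.orb_left] at h1
      rw [ha.orb_left] at hz
      rcases hz with rfl | rfl <;> rcases h1 with h1 | h1
      · exact h1
      · exact (key l hl _ _ _ _ ha h1).elim
      · exact (key l hl _ _ _ _ ha (by rw [← h1, apply_apply_of_mul_self (h.t_sq k hk)])).elim
      · exact h1
    intro z hz
    obtain ⟨l, hl, hzl⟩ := hcover z
    rcases hzl with hzl | hzl
    · exact key2 l hl _ _ _ _ (hA l hl) z hzl hz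
    · exact key2 l hl _ _ _ _ ((hA l hl).symm (h.t_sq l hl)) z hzl hz
  have hmeet : ∀ k, k + 2 < N → ∃ c, c ∈ Z k ∧ c ∈ Z (k + 1) := by
    intro k hk
    by_contra! hcon
    have := h.trans {z | ∃ l, l ≤ k ∧ z ∈ Z l}
      ⟨x 0, 0, by omega, Or.inl (mem_orb_self _ _)⟩
      (by rintro j hj z ⟨l, hl, hz⟩; exact ⟨l, hl, hZE l _ (hsE j hj) z hz⟩)
      (by
        rintro i hi z ⟨l, hl, hz⟩
        by_cases hzi : z ∈ Z i
        · by_cases hik : i ≤ k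
          · exact ⟨i, hik, hZτ i hi z hzi⟩
          · exfalso
            by_cases hli : l + 1 < i
            · exact hdisj l i (by omega) hi (Or.inl hli) z hz hzi
            · have e1 : l = k := by omega
              have e2 : i = k + 1 := by omega
              subst e1 e2
              exact hcon z hz hzi
        · rw [htfix i hi z hzi]; exact ⟨l, hl, hz⟩)
    obtain ⟨z, hz⟩ := hne (k + 1)
    obtain ⟨l, hl, hz'⟩ : z ∈ {z | ∃ l, l ≤ k ∧ z ∈ Z l} := by rw [this]; trivial
    by_cases hlk : l = k
    · subst hlk; exact hcon z hz' hz
    · exact hdisj l (k + 1) (by omega) (by omega) (by omega) z hz' hz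
  have hsplit : ∀ k, ∀ c ∈ Z k, ∀ c' ∈ Z k, c' ∉ E.orb c → ∀ z ∈ Z k,
      z ∈ E.orb c ∨ z ∈ E.orb c' := by
    intro k c hc c' hc' hcc z hz
    have e : ∀ u, u ∈ E.orb (x k) → E.orb u = E.orb (x k) := fun u => orb_eq_of_mem
    have e' : ∀ u, u ∈ E.orb (x' k) → E.orb u = E.orb (x' k) := fun u => orb_eq_of_mem
    rcases hc with hc | hc <;> rcases hc' with hc' | hc'
    · rw [e c hc] at hcc; exact absurd hc' hcc
    · rw [e c hc, e' c' hc']; exact hz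
    · rw [e' c hc, e c' hc']; exact hz.symm
    · rw [e' c hc] at hcc; exact absurd hc' hcc
  have hother : ∀ k, ∀ c ∈ Z k, k + 1 < N → ∃ c' ∈ Z k, c' ∉ E.orb c := by
    intro k c hc hk
    have hn := (hA k hk).notMem
    rcases hc with hc | hc
    · exact ⟨x' k, Or.inr (mem_orb_self _ _), by rwa [orb_eq_of_mem hc]⟩
    · refine ⟨x k, Or.inl (mem_orb_self _ _), fun hx => hn ?_⟩
      rw [orb_eq_of_mem hc] at hx
      rw [orb_eq_of_mem hx]; exact mem_orb_self _ _
  have hs1 : ∀ j < N, s j ≠ 1 := fun j hj h1 => h.s_notMem hj (by rw [h1]; exact one_mem _)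
  have hnotorb : ∀ k l, k + 1 < N → l + 1 < N → (k + 1 < l ∨ l + 1 < k) →
      ∀ c ∈ Z k, ∀ c' ∈ Z l, c' ∉ E.orb c := fun k l hk hl hkl c hc c' hc' hcc =>
    hdisj k l hk hl hkl c' (hZorb k c hc hcc) hc'
  -- `s 0`
  obtain ⟨c₀, hc₀, hc₀'⟩ := hmeet 0 (by omega)
  obtain ⟨e₀, he₀, hce₀⟩ := hother 0 c₀ hc₀ (by omega)
  have hs0supp : ∀ z ∉ E.orb e₀, s 0 z = z := by
    intro z hz
    obtain ⟨l, hl, hzl⟩ := hcover z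
    by_cases hl0 : l = 0
    · subst hl0
      have hzc := (hsplit 0 c₀ hc₀ e₀ he₀ hce₀ z hzl).resolve_right hz
      exact hsfix 1 (by omega) 0 (by omega) (by omega) (by omega) z (hZorb 1 _ hc₀' hzc)
    · exact hsfix l hl 0 (by omega) (by omega) (by omega) z hzl
  have hs0 : (s 0).IsSwap :=
    hE.elem.isSwap (hsE 0 (by omega)) (hs1 0 (by omega)) (hZ2 0 (by omega) e₀ he₀) hs0supp
  refine ⟨hs0, ?_, ?_, ?_⟩
  · obtain ⟨c₁, hc₁, hc₁'⟩ := hmeet 1 (by omega)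
    have hcc := hnotorb 0 2 (by omega) (by omega) (by omega) c₀ hc₀ c₁ hc₁'
    have hsupp : ∀ z, z ∉ E.orb e₀ → z ∉ E.orb c₀ → s 1 z = z := by
      intro z hz1 hz2
      obtain ⟨l, hl, hzl⟩ := hcover z
      by_cases hl0 : l = 0
      · subst hl0
        rcases hsplit 0 c₀ hc₀ e₀ he₀ hce₀ z hzl with h1 | h1
        · exact absurd h1 hz2
        · exact absurd h1 hz1
      by_cases hl1 : l = 1
      · subst hl1
        have hzc := (hsplit 1 c₀ hc₀' c₁ hc₁ hcc z hzl).resolve_left hz2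
        exact hsfix 2 (by omega) 1 (by omega) (by omega) (by omega) z (hZorb 2 _ hc₁' hzc)
      · exact hsfix l hl 1 (by omega) (by omega) (by omega) z hzl
    by_cases hfix : s 1 e₀ = e₀
    · left
      refine hE.elem.isSwap (hsE 1 (by omega)) (hs1 1 (by omega)) (hZ2 0 (by omega) c₀ hc₀) ?_
      intro z hz
      by_cases hz' : z ∈ E.orb e₀
      · exact hE.elem.fix_orb (hsE 1 (by omega)) hfix hz'
      · exact hsupp z hz' hz
    · right
      have hs0e : s 0 e₀ ≠ e₀ := by
        intro h1
        refine hs1 0 (by omega) (Equiv.ext fun z => ?_)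
        by_cases hz : z ∈ E.orb e₀
        · exact hE.elem.fix_orb (hsE 0 (by omega)) h1 hz
        · exact hs0supp z hz
      have hmem := mul_mem (hsE 1 (by omega)) (hsE 0 (by omega))
      refine hE.elem.isSwap hmem ?_ (hZ2 0 (by omega) c₀ hc₀) ?_
      · intro h1
        refine h.s_notMem (i := 0) (by omega) ?_
        have h2 : s 0 = (s 1)⁻¹ := eq_inv_of_mul_eq_one_right h1
        rw [h2]
        exact inv_mem (mem_genBy (by simp; omega))
      · intro z hz
        by_cases hz' : z ∈ E.orb e₀
        · refine hE.elem.fix_orb hmem ?_ hz'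
          obtain ⟨f, _, hf⟩ := orb_eq_pair (hZ2 0 (by omega) e₀ he₀)
          have a0 := apply_mem_orb (hsE 0 (by omega)) e₀
          have a1 := apply_mem_orb (hsE 1 (by omega)) e₀
          rw [hf] at a0 a1
          have b0 := a0.resolve_left hs0e
          have b1 := a1.resolve_left hfix
          rw [Perm.mul_apply, b0, ← b1, hE.elem.apply_apply (hsE 1 (by omega))]
        · rw [Perm.mul_apply, hs0supp z hz', hsupp z hz' hz]
  · intro j hj hjN
    obtain ⟨i, rfl⟩ : ∃ i, j = i + 2 := ⟨j - 2, by omega⟩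
    obtain ⟨a, ha, ha'⟩ := hmeet i (by omega)
    obtain ⟨b, hb, hb'⟩ := hmeet (i + 1) (by omega)
    obtain ⟨c, hc, hc'⟩ := hmeet (i + 2) (by omega)
    have hab := hnotorb i (i + 2) (by omega) (by omega) (by omega) a ha b hb'
    have hbc := hnotorb (i + 1) (i + 3) (by omega) (by omega) (by omega) b hb c hc'
    refine hE.elem.isSwap (hsE _ (by omega)) (hs1 _ (by omega)) (hZ2 _ (by omega) b hb) ?_
    intro z hz
    obtain ⟨l, hl, hzl⟩ := hcover z
    by_cases hl1 : l = i + 1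
    · subst hl1
      have hzc := (hsplit _ a ha' b hb hab z hzl).resolve_right hz
      exact hsfix i (by omega) _ (by omega) (by omega) (by omega) z (hZorb i _ ha hzc)
    by_cases hl2 : l = i + 2
    · subst hl2
      have hzc := (hsplit _ b hb' c hc hbc z hzl).resolve_left hz
      exact hsfix (i + 3) (by omega) _ (by omega) (by omega) (by omega) z (hZorb _ _ hc' hzc)
    · exact hsfix l hl _ (by omega) (by omega) (by omega) z hzl
  · intro k hk
    have ha := hA k hk
    have hb := ha.symm (h.t_sq k hk)
    refine ⟨x k, x' k, fun heq => ha.notMem (by rw [← heq]; exact mem_orb_self _ _),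
      Equiv.ext fun z => ?_⟩
    by_cases h1 : z = x k
    · rw [h1, swap_apply_left, ha.apply_left]
    by_cases h2 : z = x' k
    · rw [h2, swap_apply_right, hb.apply_left]
    rw [swap_apply_of_ne_of_ne h1 h2]
    by_cases hz : z ∈ Z k
    · rcases hz with hz | hz
      · rw [ha.orb_left] at hz
        rw [hz.resolve_left h1, ha.fix_left]
      · rw [ha.orb_right] at hz
        rw [hz.resolve_left h2, ha.fix_right]
    · exact htfix k hk z hz

theorem isSwap_right (h : IsMaxString N s t) :
    (s (N - 1)).IsSwap ∧ ((s (N - 2)).IsSwap ∨ (s (N - 2) * s (N - 1)).IsSwap) := by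
  have h1 := h.reverse.isSwap_left
  exact ⟨by simpa using h1.1, by simpa [Nat.sub_sub] using h1.2.1⟩

end IsMaxString

/-- Commuting involutions generating an elementary abelian group of nearly the largest possible
order are not normalized by an involution independent of them. -/
theorem exists_conj_notMem {Ω : Type*} [Finite Ω] {s : ℕ → Perm Ω} {J : Finset ℕ} {τ : Perm Ω}
    {S : Set Ω} (hs : ∀ i ∈ J, s i * s i = 1) (hc : ∀ i ∈ J, ∀ j ∈ J, s i * s j = s j * s i)
    (hτ : τ * τ = 1)
    (hind : ∀ i ∈ J, s i ∉ Subgroup.closure (s '' (J.erase i : Finset ℕ) ∪ {τ}))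
    (hτJ : τ ∉ genBy s J) (hfix : ∀ z ∉ S, τ z = z ∧ ∀ j ∈ J, s j z = z)
    (hcard : 2 ^ S.ncard < 4 * (2 ^ J.card * 2 ^ J.card)) :
    ∃ g ∈ genBy s J, τ * g * τ ∉ genBy s J := by
  by_contra! hn
  have hcomm := commute_of_normalizes hs hc hτ hind hn
  have hct : ∀ g ∈ genBy s J, τ * g = g * τ := by
    refine commute_closure ?_
    rintro _ ⟨j, hj, rfl⟩
    exact hcomm j hj
  have hE : (genBy s J).IsElem2 := Subgroup.IsElem2.closure_image hs hc
  have hQ := hE.sup hct hτ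
  have h1 := Subgroup.IsElem2.two_mul_card_le (P := genBy s J)
    (Q := genBy s J ⊔ Subgroup.closure {τ}) le_sup_left
    (Subgroup.mem_sup_right (Subgroup.subset_closure rfl)) hτJ
  rw [card_closure_image hs hc (fun i hi hmem =>
    hind i hi (Subgroup.closure_mono Set.subset_union_left hmem))] at h1
  have hfixQ : ∀ g ∈ genBy s J ⊔ Subgroup.closure {τ}, ∀ z ∉ S, g z = z := by
    intro g hg z hz
    have : genBy s J ⊔ Subgroup.closure {τ} ≤ MulAction.stabilizer (Perm Ω) z := by
      refine sup_le ((Subgroup.closure_le _).2 ?_) ((Subgroup.closure_le _).2 ?_)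
      · rintro _ ⟨j, hj, rfl⟩
        exact (hfix z hz).2 j hj
      · rintro _ rfl
        exact (hfix z hz).1
    exact this hg
  have h2 := hQ.card_sq_le (S := S) (by
    intro g hg z hz
    by_contra hgz
    have := hfixQ g hg _ hgz
    exact hgz (by rwa [g.injective this]))
  rw [Subgroup.card_fixer_eq_one (by
    intro g hg hgS
    ext z
    by_cases hz : z ∈ S
    · simp [hgS z hz]
    · simp [hfixQ g hg z hz])] at h2
  have h3 := Nat.mul_le_mul h1 h1
  have : 2 * 2 ^ J.card * (2 * 2 ^ J.card) = 4 * (2 ^ J.card * 2 ^ J.card) := by ring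
  omega

/-- A string of `d` independent involutions. -/
structure IsIndepString {G : Type*} [Group G] (d : ℕ) (σ : ℕ → G) : Prop where
  sq : ∀ i < d, σ i * σ i = 1
  comm : ∀ i < d, ∀ j < d, i + 2 ≤ j → σ i * σ j = σ j * σ i
  indep : ∀ i < d, σ i ∉ genBy σ ((Finset.range d).erase i)

namespace IsIndepString

variable {G : Type*} [Group G] {d : ℕ} {σ : ℕ → G}

theorem comm_even (h : IsIndepString d σ) {i j : ℕ} (hi : 2 * i < d) (hj : 2 * j < d) :
    σ (2 * i) * σ (2 * j) = σ (2 * j) * σ (2 * i) := by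
  rcases lt_trichotomy i j with hij | rfl | hij
  · exact h.comm _ hi _ hj (by omega)
  · rfl
  · exact (h.comm _ hj _ hi (by omega)).symm

theorem comm_odd (h : IsIndepString d σ) {i j : ℕ} (hi : 2 * i + 1 < d) (hj : 2 * j + 1 < d) :
    σ (2 * i + 1) * σ (2 * j + 1) = σ (2 * j + 1) * σ (2 * i + 1) := by
  rcases lt_trichotomy i j with hij | rfl | hij
  · exact h.comm _ hi _ hj (by omega)
  · rfl
  · exact (h.comm _ hj _ hi (by omega)).symm

theorem comm_odd_even (h : IsIndepString d σ) {k j : ℕ} (hk : 2 * k + 1 < d) (hj : 2 * j < d)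
    (h1 : j ≠ k) (h2 : j ≠ k + 1) : σ (2 * k + 1) * σ (2 * j) = σ (2 * j) * σ (2 * k + 1) := by
  rcases lt_or_gt_of_ne h1 with hjk | hjk
  · exact (h.comm _ hj _ hk (by omega)).symm
  · exact h.comm _ hk _ hj (by omega)

theorem notMem_closure (h : IsIndepString d σ) {i : ℕ} (hi : i < d) {A : Set G}
    (hA : A ⊆ genBy σ ((Finset.range d).erase i)) : σ i ∉ Subgroup.closure A :=
  fun hmem => h.indep i hi ((Subgroup.closure_le _).2 hA hmem)

theorem mem_genBy_erase {i j : ℕ} (hj : j < d) (hji : j ≠ i) :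
    σ j ∈ genBy σ ((Finset.range d).erase i) := mem_genBy (by simp [hj, hji])

theorem ne_one (h : IsIndepString d σ) {i : ℕ} (hi : i < d) : σ i ≠ 1 := fun he =>
  h.indep i hi (by rw [he]; exact one_mem _)

theorem card_even [Finite G] (h : IsIndepString d σ) {M : ℕ} (hM : 2 * M ≤ d + 1) :
    Nat.card (genBy (fun j => σ (2 * j)) (Finset.range M)) = 2 ^ M := by
  have := card_closure_image (s := fun j => σ (2 * j)) (J := Finset.range M)
    (fun i hi => h.sq _ (by simp at hi; omega))
    (fun i hi j hj => h.comm_even (by simp at hi; omega) (by simp at hj; omega))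
    (fun i hi => by
      simp only [Finset.mem_range] at hi
      refine h.notMem_closure (by omega) ?_
      rintro _ ⟨j, hj, rfl⟩
      simp at hj
      exact mem_genBy_erase (by omega) (by omega))
  rwa [Finset.card_range] at this

variable {Ω : Type*} {σ : ℕ → Perm Ω}

theorem isElem2_even (h : IsIndepString d σ) {M : ℕ} (hM : 2 * M ≤ d + 1) :
    (genBy (fun j => σ (2 * j)) (Finset.range M)).IsElem2 :=
  Subgroup.IsElem2.closure_image (fun i hi => h.sq _ (by simp at hi; omega))
    (fun i hi j hj => h.comm_even (by simp at hi; omega) (by simp at hj; omega))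

variable [Finite Ω]

/-- The odd members do not normalize the group generated by the even ones. -/
theorem not_norm_even (h : IsIndepString d σ) {M : ℕ} (hM : 2 * M ≤ d + 1) {S : Set Ω}
    (hS : ∀ i < d, ∀ z ∉ S, σ i z = z) (hcard : S.ncard < 2 * M + 2) {k l : ℕ}
    (hk : 2 * k + 1 < d) {τ : Perm Ω} (hτ : τ = σ (2 * k + 1) ∨ 2 * l + 1 < d ∧ l ≠ k ∧
      τ = σ (2 * k + 1) * σ (2 * l + 1)) :
    ∃ g ∈ genBy (fun j => σ (2 * j)) (Finset.range M),
      τ * g * τ ∉ genBy (fun j => σ (2 * j)) (Finset.range M) := by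
  refine exists_conj_notMem (S := S) (fun i hi => h.sq _ (by simp at hi; omega))
    (fun i hi j hj => h.comm_even (by simp at hi; omega) (by simp at hj; omega)) ?_ ?_ ?_ ?_ ?_
  · rcases hτ with rfl | ⟨hl, -, rfl⟩
    · exact h.sq _ hk
    · rw [mul_assoc, ← mul_assoc (σ (2 * l + 1)), h.comm_odd hl hk, mul_assoc, h.sq _ hl, mul_one,
        h.sq _ hk]
  · intro i hi
    simp only [Finset.mem_range] at hi
    refine h.notMem_closure (by omega) (Set.union_subset ?_ ?_)
    · rintro _ ⟨j, hj, rfl⟩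
      simp at hj
      exact mem_genBy_erase (by omega) (by omega)
    · rintro _ rfl
      rcases hτ with rfl | ⟨hl, -, rfl⟩
      · exact mem_genBy_erase (by omega) (by omega)
      · exact mul_mem (mem_genBy_erase (by omega) (by omega))
          (mem_genBy_erase (by omega) (by omega))
  · intro hmem
    refine h.indep _ hk ?_
    have hle : genBy (fun j => σ (2 * j)) (Finset.range M) ≤
        genBy σ ((Finset.range d).erase (2 * k + 1)) := by
      refine (Subgroup.closure_le _).2 ?_
      rintro _ ⟨j, hj, rfl⟩
      simp at hj
      exact mem_genBy_erase (by omega) (by omega)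
    rcases hτ with rfl | ⟨hl, hlk, rfl⟩
    · exact hle hmem
    · exact (Subgroup.mul_mem_cancel_right _ (mem_genBy_erase hl (by omega))).1 (hle hmem)
  · intro z hz
    refine ⟨?_, fun j hj => hS _ (by simp at hj; omega) z hz⟩
    rcases hτ with rfl | ⟨hl, -, rfl⟩
    · exact hS _ hk z hz
    · rw [Perm.mul_apply, hS _ hl z hz, hS _ hk z hz]
  · rw [Finset.card_range, ← pow_add, show 4 * 2 ^ (M + M) = 2 ^ (2 * M + 2) by ring]
    exact Nat.pow_lt_pow_right (by norm_num) hcard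

theorem two_mul_le_card (h : IsIndepString d σ) {M : ℕ} (hM : 2 * M ≤ d + 1) :
    2 * M ≤ Nat.card Ω := by
  have h1 := (h.isElem2_even hM).card_sq_le (S := Set.univ) (fun _ _ _ _ => Set.mem_univ _)
  rw [Subgroup.card_fixer_eq_one (by intro g _ hg; ext z; simp [hg z (Set.mem_univ z)]),
    h.card_even hM, Set.ncard_univ, ← pow_add, mul_one, mul_one,
    Nat.pow_le_pow_iff_right (by norm_num)] at h1
  omega

theorem isMaxElem2_even (h : IsIndepString d σ) {N : ℕ} (hd : 2 * N ≤ d + 1)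
    (hΩ : Nat.card Ω = 2 * N) :
    (genBy (fun j => σ (2 * j)) (Finset.range N)).IsMaxElem2 where
  elem := h.isElem2_even hd
  card_sq := by rw [h.card_even hd, hΩ, two_mul, pow_add]

/-- A string of independent involutions is shorter than the number of points. -/
theorem lt_card (h : IsIndepString d σ) (hd : 0 < d) : d < Nat.card Ω := by
  by_contra! hle
  have h1 := h.two_mul_le_card (M := (d + 1) / 2) (by omega)
  obtain ⟨N, hN⟩ : ∃ N, d = 2 * (N + 1) := ⟨d / 2 - 1, by omega⟩
  have hΩ : Nat.card Ω = 2 * (N + 1) := by omega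
  have h2 := (h.isMaxElem2_even (N := N + 1) (by omega) hΩ).type_cases
    (W := genBy (fun j => σ (2 * j)) (Finset.range N)) (τ := σ (2 * N + 1))
    (genBy_mono (by simp)) (by
      rw [h.card_even (by omega), h.card_even (by omega), pow_succ]; omega)
    (h.sq _ (by omega)) (commute_closure (by
      rintro _ ⟨j, hj, rfl⟩
      simp at hj
      exact h.comm_odd_even (by omega) (by omega) (by omega) (by omega)))
    (h.not_norm_even (S := Set.univ) (by omega) (by simp) (by rw [Set.ncard_univ]; omega)
      (by omega) (l := 0) (Or.inl rfl))
  rw [h.card_even (by omega), h.card_even (by omega), pow_succ] at h2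
  have := Nat.pow_pos (n := N) (show 0 < 2 by norm_num)
  omega

theorem isMaxString {N : ℕ} (h : IsIndepString (2 * N - 1) σ) (hN : 4 ≤ N)
    (hΩ : Nat.card Ω = 2 * N)
    (htr : ∀ S : Set Ω, S.Nonempty → (∀ i < 2 * N - 1, ∀ z ∈ S, σ i z ∈ S) → S = Set.univ) :
    IsMaxString N (fun j => σ (2 * j)) (fun k => σ (2 * k + 1)) where
  card := hΩ
  four_le := hN
  s_sq j hj := h.sq _ (by omega)
  s_comm i hi j hj := h.comm_even (by omega) (by omega)
  s_card := h.card_even (by omega)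
  t_sq k hk := h.sq _ (by omega)
  t_comm k hk l hl := h.comm_odd (by omega) (by omega)
  ts_comm k hk j hj h1 h2 := h.comm_odd_even (by omega) (by omega) h1 h2
  not_norm k hk := h.not_norm_even (S := Set.univ) (by omega) (by simp)
    (by rw [Set.ncard_univ]; omega) (by omega) (l := 0) (Or.inl rfl)
  trans S hS h1 h2 := htr S hS (by
    intro i hi
    rcases Nat.even_or_odd' i with ⟨j, rfl | rfl⟩
    · exact h1 j (by omega)
    · exact h2 j (by omega))

end IsIndepString

namespace Subgroup

variable {Ω : Type*} [DecidableEq Ω] {P B : Subgroup (Perm Ω)} {p o : Ω}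

theorem mul_swap_comm {g : Perm Ω} (hp : g p = p) (ho : g o = o) :
    swap p o * g = g * swap p o := by
  rw [mul_swap_eq_swap_mul, hp, ho]

theorem mem_sup_swap (hp : ∀ g ∈ P, g p = p) (ho : ∀ g ∈ P, g o = o) {g : Perm Ω} :
    g ∈ P ⊔ closure {swap p o} ↔ g ∈ P ∨ swap p o * g ∈ P :=
  IsElem2.mem_sup_iff (fun g hg => mul_swap_comm (hp g hg) (ho g hg)) (by simp)

theorem mem_of_mem_sup_swap (hpo : p ≠ o) (hp : ∀ g ∈ P, g p = p) (ho : ∀ g ∈ P, g o = o)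
    {g : Perm Ω} (hg : g ∈ P ⊔ closure {swap p o}) (hgo : g o = o) : g ∈ P := by
  rcases (mem_sup_swap hp ho).1 hg with h | h
  · exact h
  · have := ho _ h
    rw [Perm.mul_apply, hgo, swap_apply_right] at this
    exact absurd this hpo

theorem card_sup_swap [Finite Ω] (hpo : p ≠ o) (hp : ∀ g ∈ P, g p = p) (ho : ∀ g ∈ P, g o = o) :
    Nat.card (P ⊔ closure {swap p o} : Subgroup (Perm Ω)) = 2 * Nat.card P := by
  refine le_antisymm (IsElem2.card_sup_le
    (fun g hg => mul_swap_comm (hp g hg) (ho g hg)) (by simp)) ?_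
  refine IsElem2.two_mul_card_le (t := swap p o) le_sup_left
    (mem_sup_right (subset_closure rfl)) ?_
  intro h
  have := ho _ h
  rw [swap_apply_right] at this
  exact hpo this

theorem orb_sup_swap (hp : ∀ g ∈ P, g p = p) (ho : ∀ g ∈ P, g o = o) {z : Ω} (hzp : z ≠ p)
    (hzo : z ≠ o) : (P ⊔ closure {swap p o}).orb z = P.orb z := by
  ext v
  constructor
  · rintro ⟨g, hg, rfl⟩
    rcases (mem_sup_swap hp ho).1 hg with h | h
    · exact apply_mem_orb h z
    · refine ⟨_, h, ?_⟩
      have h1 : swap p o * g = g * swap p o := by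
        have h2 := mul_swap_comm (hp _ h) (ho _ h)
        rw [← mul_assoc, swap_mul_self, one_mul] at h2
        calc swap p o * g = swap p o * (swap p o * g * swap p o) := by rw [← h2]
          _ = g * swap p o := by rw [mul_assoc, ← mul_assoc (swap p o) (swap p o), swap_mul_self, one_mul]
      rw [h1, Perm.mul_apply, swap_apply_of_ne_of_ne hzp hzo]
  · rintro ⟨g, hg, rfl⟩
    exact apply_mem_orb (mem_sup_left hg) z

theorem orb_sup_swap_left (hp : ∀ g ∈ P, g p = p) (ho : ∀ g ∈ P, g o = o) {z : Ω}
    (hz : z = p ∨ z = o) : (P ⊔ closure {swap p o}).orb z ⊆ {p, o} := by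
  refine orb_subset ?_ (by simpa using hz)
  intro g hg v hv
  rcases (mem_sup_swap hp ho).1 hg with h | h
  · rcases hv with rfl | rfl
    · simp [hp _ h]
    · simp [ho _ h]
  · have hgv : g v = swap p o ((swap p o * g) v) := by simp
    rcases hv with rfl | rfl
    · rw [hgv, hp _ h]; simp
    · rw [hgv, ho _ h]; simp

/-- An elementary abelian 2-group of the largest possible order on an odd number of points (an
extra point `o` is fixed), together with an involution `τ` centralizing a subgroup of index two
but not normalizing the group. -/
theorem IsElem2.exists_triple [Finite Ω] {τ : Perm Ω} (hP : P.IsElem2)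
    (hcard : 2 * Nat.card P * (2 * Nat.card P) = 2 ^ Nat.card Ω) (heven : Even (Nat.card Ω))
    (ho : ∀ g ∈ P, g o = o) (hBP : B ≤ P) (hB : Nat.card P ≤ 2 * Nat.card B) (hτ : τ * τ = 1)
    (hτo : τ o = o) (hBτ : ∀ w ∈ B, τ * w = w * τ) (hn : ∃ g ∈ P, τ * g * τ ∉ P) :
    ∃ p x y, p ≠ o ∧ x ≠ y ∧ p ≠ x ∧ x ≠ o ∧ (∀ g ∈ P, g p = p) ∧ P.orb x = {x, y} ∧
      τ p = x ∧ τ y = y ∧ (∀ w ∈ B, w p = p ∧ w x = x ∧ w y = y) ∧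
      ∀ z, z ≠ p → z ≠ o → z ≠ x → z ≠ y → τ z ∈ P.orb z := by
  obtain ⟨p, hp, hpo⟩ : ∃ p, (∀ g ∈ P, g p = p) ∧ p ≠ o := by
    have hpg : IsPGroup 2 P := fun g => ⟨1, by
      ext1; simpa [sq] using hP g g.2⟩
    obtain ⟨p, hp, hne⟩ := hpg.exists_fixed_point_of_prime_dvd_card_of_fixed_point Ω
      heven.two_dvd (a := o) (fun g => ho g g.2)
    exact ⟨p, fun g hg => hp ⟨g, hg⟩, hne.symm⟩
  set E := P ⊔ closure {swap p o} with hE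
  have hcE : Nat.card E = 2 * Nat.card P := card_sup_swap hpo hp ho
  have hswE : swap p o ∈ E := mem_sup_right (subset_closure rfl)
  have hswB : swap p o ∉ B := fun h => hpo (by simpa using ho _ (hBP h))
  have hmax : E.IsMaxElem2 :=
    { elem := hP.sup (fun g hg => mul_swap_comm (hp g hg) (ho g hg)) (by simp)
      card_sq := by rw [hcE, hcard] }
  have hPE : P ≤ E := le_sup_left
  obtain ⟨-, hcases⟩ := hmax.type_cases (hBP.trans hPE) (by omega) hτ hBτ (by
    obtain ⟨g, hg, hg'⟩ := hn
    refine ⟨g, hPE hg, fun h => hg' (mem_of_mem_sup_swap hpo hp ho h ?_)⟩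
    simp [hτo, ho g hg])
  rcases hcases with ⟨x₁, y₁, x₂, y₂, hA⟩ | ⟨O, u, v, w, hTB⟩
  · wlog hx : x₁ = p ∨ x₁ = o generalizing x₁ y₁ x₂ y₂
    · refine this x₂ y₂ x₁ y₁ (hA.symm hτ) ?_
      by_contra! hx2
      push Not at hx
      exact hswB (hA.mem _ hswE (swap_apply_of_ne_of_ne hx.1 hx.2)
        (swap_apply_of_ne_of_ne hx2.1 hx2.2))
    have horb := orb_sup_swap_left hp ho hx
    rw [← hE, hA.orb_left] at horb
    have hx1 : x₁ = p := by
      refine hx.resolve_right ?_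
      rintro rfl
      refine hA.notMem ?_
      rw [← hA.apply_left, hτo]
      exact mem_orb_self _ _
    subst hx1
    have hy1 : y₁ = o := by
      have := horb (Set.mem_insert_of_mem _ rfl)
      exact (this.resolve_left hA.ne_left.symm)
    subst hy1
    have hx2 : x₂ ≠ x₁ ∧ x₂ ≠ y₁ := by
      have := hA.notMem
      rw [hA.orb_left] at this
      simpa using this
    refine ⟨x₁, x₂, y₂, hpo, hA.ne_right, hx2.1.symm, hx2.2, hp, ?_, hA.apply_left,
      hA.fix_right, fun w hw => ⟨(hA.fix w hw).1, (hA.fix w hw).2, ?_⟩, ?_⟩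
    · rw [← orb_sup_swap hp ho hx2.1 hx2.2]; exact hA.orb_right
    · refine hmax.elem.fix_orb (x := x₂) (hPE (hBP hw)) (hA.fix w hw).2 ?_
      rw [hA.orb_right]; simp
    · intro z h1 h2 h3 h4
      rw [← orb_sup_swap hp ho h1 h2]
      refine hA.off z ?_ ?_
      · rw [hA.orb_left]; simp [h1, h2]
      · rw [hA.orb_right]; simp [h3, h4]
  · exfalso
    have hw := hBP hTB.mem_w
    refine hswB (hTB.mem _ hswE fun z hz => swap_apply_of_ne_of_ne ?_ ?_)
    · rintro rfl; exact hTB.w_ne _ hz (hp _ hw)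
    · rintro rfl; exact hTB.w_ne _ hz (ho _ hw)

end Subgroup

namespace IsIndepString

open Subgroup

variable {Ω : Type*} {K : ℕ} {σ : ℕ → Perm Ω} {o : Ω}

theorem fix_genBy {s : ℕ → Perm Ω} {J : Finset ℕ} {z : Ω} (h : ∀ j ∈ J, s j z = z) :
    ∀ g ∈ genBy s J, g z = z := by
  intro g hg
  have : genBy s J ≤ MulAction.stabilizer (Perm Ω) z := by
    refine (closure_le _).2 ?_
    rintro _ ⟨j, hj, rfl⟩
    exact h j hj
  exact this hg

theorem apply_odd (h : IsIndepString (2 * K + 2) σ)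
    (ho : ∀ i < 2 * K + 2, σ i o = o) {p x y : Ω} (hpo : p ≠ o) (hxy : x ≠ y)
    (hp : ∀ j ≤ K, σ (2 * j) p = p) (hax : σ (2 * K) x = y)
    (hbp : σ (2 * K + 1) p = x)
    (hoff : ∀ z, z ≠ p → z ≠ o → z ≠ x → z ≠ y →
        σ (2 * K + 1) z ∈ (genBy (fun j => σ (2 * j)) (Finset.range (K + 1))).orb z)
    {k : ℕ} (hk : k + 1 < K) : σ (2 * k + 1) p = p := by
  by_contra hqp
  have hca : ∀ z, σ (2 * k + 1) (σ (2 * K) z) = σ (2 * K) (σ (2 * k + 1) z) := fun z =>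
    DFunLike.congr_fun (h.comm_odd_even (by omega) (by omega) (by omega) (by omega)) z
  have hcb : ∀ z, σ (2 * k + 1) (σ (2 * K + 1) z) = σ (2 * K + 1) (σ (2 * k + 1) z) := fun z =>
    DFunLike.congr_fun (h.comm_odd (by omega) (by omega)) z
  have haq : σ (2 * K) (σ (2 * k + 1) p) = σ (2 * k + 1) p := by rw [← hca, hp K le_rfl]
  have hay : σ (2 * K) y = x := by
    rw [← hax]; exact apply_apply_of_mul_self (h.sq _ (by omega)) x
  have hmem := hoff (σ (2 * k + 1) p) hqp
    (fun e => hpo ((σ (2 * k + 1)).injective (by rw [e, ho _ (by omega)])))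
    (fun e => hxy (by rw [e, hax] at haq; exact haq.symm))
    (fun e => hxy (by rw [e, hay] at haq; exact haq))
  have hfix := (h.isElem2_even (M := K + 1) (by omega)).fix_orb
    (mem_genBy (s := fun j => σ (2 * j)) (j := K) (by simp)) haq hmem
  have h1 : σ (2 * k + 1) x = σ (2 * K + 1) (σ (2 * k + 1) p) := by rw [← hbp, hcb]
  have h2 : σ (2 * k + 1) y = σ (2 * K + 1) (σ (2 * k + 1) p) := by
    rw [← hax, hca, h1]; exact hfix
  exact hxy ((σ (2 * k + 1)).injective (h1.trans h2.symm))

variable [Finite Ω] [DecidableEq Ω]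

theorem exists_triple_last (h : IsIndepString (2 * K + 2) σ) (hΩ : Nat.card Ω = 2 * K + 4)
    (ho : ∀ i < 2 * K + 2, σ i o = o) :
    ∃ p x y, p ≠ o ∧ x ≠ y ∧ p ≠ x ∧ x ≠ o ∧ (∀ j ≤ K, σ (2 * j) p = p) ∧
      (∀ j < K, σ (2 * j) x = x) ∧ σ (2 * K) x = y ∧ σ (2 * K + 1) p = x ∧
      ∀ z, z ≠ p → z ≠ o → z ≠ x → z ≠ y →
        σ (2 * K + 1) z ∈ (genBy (fun j => σ (2 * j)) (Finset.range (K + 1))).orb z := by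
  have hS : ∀ i < 2 * K + 2, ∀ z ∉ ({o}ᶜ : Set Ω), σ i z = z := by
    intro i hi z hz
    simp only [Set.mem_compl_iff, Set.mem_singleton_iff, not_not] at hz
    rw [hz, ho i hi]
  have hSc : ({o}ᶜ : Set Ω).ncard = 2 * K + 3 := by
    rw [Set.ncard_compl, Set.ncard_singleton, hΩ]; omega
  obtain ⟨p, x, y, hpo, hxy, hpx, hxo, hp, horb, hbp, -, hB, hoff⟩ :=
    IsElem2.exists_triple (P := genBy (fun j => σ (2 * j)) (Finset.range (K + 1)))
    (B := genBy (fun j => σ (2 * j)) (Finset.range K)) (τ := σ (2 * K + 1)) (o := o)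
    (h.isElem2_even (by omega)) (by rw [h.card_even (by omega), hΩ]; ring)
    (by rw [hΩ]; exact ⟨K + 2, by ring⟩)
    (fix_genBy (fun j hj => ho _ (by simp at hj; omega))) (genBy_mono (by simp))
    (by rw [h.card_even (by omega), h.card_even (by omega), pow_succ, mul_comm])
    (h.sq _ (by omega)) (ho _ (by omega)) (commute_closure (by
      rintro _ ⟨j, hj, rfl⟩
      simp at hj
      exact h.comm_odd_even (by omega) (by omega) (by omega) (by omega)))
    (h.not_norm_even (by omega) hS (by omega) (by omega) (l := 0) (Or.inl rfl))
  have hBx : ∀ j < K, σ (2 * j) x = x := fun j hj =>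
    (hB _ (mem_genBy (s := fun j => σ (2 * j)) (by simpa using hj))).2.1
  refine ⟨p, x, y, hpo, hxy, hpx, hxo, fun j hj => hp _ (mem_genBy (s := fun j => σ (2 * j))
    (by simp; omega)), hBx, ?_, hbp, hoff⟩
  by_contra hne
  have hx : σ (2 * K) x = x := by
    have : σ (2 * K) x ∈ (genBy (fun j => σ (2 * j)) (Finset.range (K + 1))).orb x :=
      apply_mem_orb (mem_genBy (s := fun j => σ (2 * j)) (by simp)) x
    rw [horb] at this
    exact this.resolve_right hne
  have hy : y ∈ (genBy (fun j => σ (2 * j)) (Finset.range (K + 1))).orb x := by rw [horb]; simp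
  obtain ⟨g, hg, hgx⟩ := hy
  refine hxy ?_
  rw [← hgx, fix_genBy (z := x) ?_ g hg]
  intro j hj
  rcases Nat.lt_succ_iff_lt_or_eq.1 (Finset.mem_range.1 hj) with hj | rfl
  · exact hBx j hj
  · exact hx

/-- The last but one odd member, after multiplication by the last one if necessary, fixes the
point `p`. -/
theorem apply_penultimate (h : IsIndepString (2 * K + 2) σ) (hK : 1 ≤ K)
    (hΩ : Nat.card Ω = 2 * K + 4) (ho : ∀ i < 2 * K + 2, σ i o = o) {p x : Ω} (hpo : p ≠ o)
    (hpx : p ≠ x) (hp : ∀ j ≤ K, σ (2 * j) p = p) (hx : ∀ j < K, σ (2 * j) x = x)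
    (hbp : σ (2 * K + 1) p = x) : σ (2 * (K - 1) + 1) p = p ∨ σ (2 * (K - 1) + 1) p = x := by
  set J : Finset ℕ := insert (2 * K + 1) ((Finset.range K).image (2 * ·)) with hJ
  have hmemJ : ∀ j, j ∈ J ↔ j = 2 * K + 1 ∨ ∃ i < K, 2 * i = j := by
    intro j; simp [hJ]
  have hcJ : J.card = K + 1 := by
    rw [hJ, Finset.card_insert_of_notMem (by simp; omega), Finset.card_image_of_injective _
      (fun a b hab => by simpa using hab), Finset.card_range]
  have hlt : ∀ j ∈ J, j < 2 * K + 2 := by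
    intro j hj
    rcases (hmemJ j).1 hj with rfl | ⟨i, hi, rfl⟩ <;> omega
  have hsq : ∀ j ∈ J, σ j * σ j = 1 := fun j hj => h.sq j (hlt j hj)
  have hcomm : ∀ i ∈ J, ∀ j ∈ J, σ i * σ j = σ j * σ i := by
    intro i hi j hj
    rcases (hmemJ i).1 hi with rfl | ⟨i, hi, rfl⟩ <;> rcases (hmemJ j).1 hj with rfl | ⟨j, hj, rfl⟩
    · rfl
    · exact h.comm_odd_even (by omega) (by omega) (by omega) (by omega)
    · exact (h.comm_odd_even (by omega) (by omega) (by omega) (by omega)).symm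
    · exact h.comm_even (by omega) (by omega)
  have hind : ∀ A ⊆ J, ∀ i ∈ A, σ i ∉ closure (σ '' (A.erase i : Finset ℕ)) := by
    intro A hA i hi
    refine h.notMem_closure (hlt i (hA hi)) ?_
    rintro _ ⟨j, hj, rfl⟩
    simp only [Finset.coe_erase, Set.mem_sdiff, SetLike.mem_coe, Set.mem_singleton_iff] at hj
    exact mem_genBy_erase (hlt j (hA hj.1)) hj.2
  have hcP : Nat.card (genBy σ J) = 2 ^ (K + 1) := by
    rw [← hcJ]; exact card_closure_image hsq hcomm (hind J subset_rfl)
  have heJ : 2 * (K - 1) ∈ J := (hmemJ _).2 (Or.inr ⟨K - 1, by omega, rfl⟩)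
  have hsub : J.erase (2 * (K - 1)) ⊆ J := Finset.erase_subset _ _
  have hcB : Nat.card (genBy σ (J.erase (2 * (K - 1)))) = 2 ^ K := by
    have := card_closure_image (J := J.erase (2 * (K - 1))) (fun i hi => hsq i (hsub hi))
      (fun i hi j hj => hcomm i (hsub hi) j (hsub hj)) (hind _ hsub)
    rwa [Finset.card_erase_of_mem heJ, hcJ, Nat.add_sub_cancel] at this
  have hτJ : 2 * (K - 1) + 1 ∉ J := by
    rw [hmemJ]; rintro (h1 | ⟨i, -, h1⟩) <;> omega
  obtain ⟨p', x', y', -, -, -, -, -, -, -, -, hB, hoff⟩ :=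
    IsElem2.exists_triple (P := genBy σ J) (B := genBy σ (J.erase (2 * (K - 1))))
    (τ := σ (2 * (K - 1) + 1)) (o := o) (IsElem2.closure_image hsq hcomm)
    (by rw [hcP, hΩ]; ring) (by rw [hΩ]; exact ⟨K + 2, by ring⟩)
    (fix_genBy (fun j hj => ho _ (hlt j hj))) (genBy_mono hsub)
    (by rw [hcP, hcB, pow_succ, mul_comm])
    (h.sq _ (by omega)) (ho _ (by omega)) (commute_closure (by
      rintro _ ⟨j, hj, rfl⟩
      simp only [Finset.coe_erase, Set.mem_sdiff, SetLike.mem_coe, Set.mem_singleton_iff] at hj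
      rcases (hmemJ j).1 hj.1 with rfl | ⟨i, hi, rfl⟩
      · exact h.comm_odd (by omega) (by omega)
      · exact h.comm_odd_even (by omega) (by omega) (by omega) (by omega)))
    (exists_conj_notMem (S := {o}ᶜ) hsq hcomm (h.sq _ (by omega))
      (fun i hi => by
        refine h.notMem_closure (hlt i hi) (Set.union_subset ?_ ?_)
        · rintro _ ⟨j, hj, rfl⟩
          simp only [Finset.coe_erase, Set.mem_sdiff, SetLike.mem_coe,
            Set.mem_singleton_iff] at hj
          exact mem_genBy_erase (hlt j hj.1) hj.2
        · rintro _ rfl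
          refine mem_genBy_erase (by omega) ?_
          rintro rfl; exact hτJ hi)
      (h.notMem_closure (by omega) (by
        rintro _ ⟨j, hj, rfl⟩
        refine mem_genBy_erase (hlt j hj) ?_
        rintro rfl; exact hτJ hj))
      (fun z hz => by
        simp only [Set.mem_compl_iff, Set.mem_singleton_iff, not_not] at hz
        subst hz
        exact ⟨ho _ (by omega), fun j hj => ho _ (hlt j hj)⟩)
      (by
        rw [Set.ncard_compl, Set.ncard_singleton, hΩ, hcJ, ← pow_add,
          show 4 * 2 ^ (K + 1 + (K + 1)) = 2 ^ (2 * K + 4) by ring]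
        exact Nat.pow_lt_pow_right (by norm_num) (by omega)))
  have hb := hB (σ (2 * K + 1)) (mem_genBy (by
    rw [Finset.mem_erase, hmemJ]; exact ⟨by omega, Or.inl rfl⟩))
  have hbne : σ (2 * K + 1) p ≠ p := by rw [hbp]; exact hpx.symm
  have h1 := hoff p (by rintro rfl; exact hbne hb.1) hpo (by rintro rfl; exact hbne hb.2.1)
    (by rintro rfl; exact hbne hb.2.2)
  have h2 : (genBy σ J).orb p ⊆ {p, x} := by
    refine orb_subset (Subgroup.closure_mapsTo ?_) (by simp)
    rintro _ ⟨j, hj, rfl⟩ z (rfl | rfl)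
    · rcases (hmemJ j).1 hj with rfl | ⟨i, hi, rfl⟩
      · simp [hbp]
      · simp [hp i hi.le]
    · rcases (hmemJ j).1 hj with rfl | ⟨i, hi, rfl⟩
      · left; rw [← hbp]; exact apply_apply_of_mul_self (h.sq _ (by omega)) p
      · simp [hx i hi]
  exact h2 h1

end IsIndepString

namespace IsIndepString

open Subgroup

variable {Ω : Type*} [Finite Ω] [DecidableEq Ω] {K : ℕ} {σ : ℕ → Perm Ω} {o : Ω}

/-- Adjoining a transposition to a string on an odd number of points yields a string on an even
number of points. -/
theorem isMaxString_extend (h : IsIndepString (2 * K + 2) σ) (hK : 2 ≤ K)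
    (hΩ : Nat.card Ω = 2 * K + 4) (ho : ∀ i < 2 * K + 2, σ i o = o)
    (htr : ∀ S : Set Ω, (∃ z ∈ S, z ≠ o) → (∀ i < 2 * K + 2, ∀ z ∈ S, σ i z ∈ S) →
      ∀ z, z ≠ o → z ∈ S) :
    ∃ p τ, p ≠ o ∧ σ (2 * K) p = p ∧
      (τ = σ (2 * (K - 1) + 1) ∨ τ = σ (2 * (K - 1) + 1) * σ (2 * K + 1)) ∧
      IsMaxString (K + 2) (fun j => if j = K + 1 then swap p o else σ (2 * j))
        (fun k => if k = K - 1 then τ else σ (2 * k + 1)) := by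
  obtain ⟨p, x, y, hpo, hxy, hpx, hxo, hp, hBx, hax, hbp, hoff⟩ := h.exists_triple_last hΩ ho
  have hττ : ∃ τ, (τ = σ (2 * (K - 1) + 1) ∨ τ = σ (2 * (K - 1) + 1) * σ (2 * K + 1)) ∧
      τ p = p := by
    rcases h.apply_penultimate (by omega) hΩ ho hpo hpx hp hBx hbp with h1 | h1
    · exact ⟨_, Or.inl rfl, h1⟩
    · refine ⟨_, Or.inr rfl, ?_⟩
      rw [Perm.mul_apply, hbp, ← h1]
      exact apply_apply_of_mul_self (h.sq _ (by omega)) p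
  obtain ⟨τ, hτ, hτp⟩ := hττ
  refine ⟨p, τ, hpo, hp K le_rfl, hτ, ?_⟩
  set s : ℕ → Perm Ω := fun j => if j = K + 1 then swap p o else σ (2 * j) with hs
  set t : ℕ → Perm Ω := fun k => if k = K - 1 then τ else σ (2 * k + 1) with ht
  set P := genBy (fun j => σ (2 * j)) (Finset.range (K + 1)) with hP
  have hpP : ∀ g ∈ P, g p = p :=
    fix_genBy fun j hj => hp j (by simp at hj; omega)
  have hoP : ∀ g ∈ P, g o = o := fix_genBy fun j hj => ho _ (by simp at hj; omega)
  have hsK : s (K + 1) = swap p o := by simp [hs]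
  have hsj : ∀ j ≤ K, s j = σ (2 * j) := fun j hj => by simp [hs]; omega
  have htK : t (K - 1) = τ := by simp [ht]
  have htk : ∀ k, k ≠ K - 1 → t k = σ (2 * k + 1) := fun k hk => by simp [ht, hk]
  have hE : genBy s (Finset.range (K + 2)) = P ⊔ closure {swap p o} := by
    rw [genBy, Finset.range_add_one, Finset.coe_insert, closure_image_insert, hsK]
    congr 2
    refine Set.image_congr fun j hj => hsj j ?_
    simp at hj; omega
  have hsE : ∀ j < K + 2, s j * s j = 1 := by
    intro j hj
    rcases Nat.lt_succ_iff_lt_or_eq.1 hj with hj | rfl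
    · rw [hsj j (by omega)]; exact h.sq _ (by omega)
    · rw [hsK]; simp
  have hto : ∀ k ≤ K, t k o = o := by
    intro k hk
    by_cases hkK : k = K - 1
    · rw [hkK, htK]
      rcases hτ with rfl | rfl
      · exact ho _ (by omega)
      · rw [Perm.mul_apply, ho _ (by omega), ho _ (by omega)]
    · rw [htk k hkK]; exact ho _ (by omega)
  have htp : ∀ k < K, t k p = p := by
    intro k hk
    by_cases hkK : k = K - 1
    · rw [hkK, htK, hτp]
    · rw [htk k hkK]
      exact h.apply_odd ho hpo hxy hp hax hbp hoff (by omega)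
  have htcomm : ∀ k ≤ K, ∀ g, (∀ l ≤ K, (l = k ∨ k = K - 1 ∧ l = K) →
      Commute (σ (2 * l + 1)) g) → Commute (t k) g := by
    intro k hk g hg
    by_cases hkK : k = K - 1
    · rw [hkK, htK]
      rcases hτ with rfl | rfl
      · exact hg _ (by omega) (by omega)
      · exact (hg _ (by omega) (by omega)).mul_left (hg _ (by omega) (by omega))
    · rw [htk k hkK]; exact hg k hk (Or.inl rfl)
  have htt : ∀ k ≤ K, ∀ l ≤ K, Commute (t k) (t l) := by
    intro k hk l hl
    refine htcomm k hk _ fun k' hk' _ => ?_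
    refine (htcomm l hl _ fun l' hl' _ => ?_).symm
    exact h.comm_odd (by omega) (by omega)
  have htsq : ∀ k ≤ K, t k * t k = 1 := by
    intro k hk
    by_cases hkK : k = K - 1
    · rw [hkK, htK]
      rcases hτ with rfl | rfl
      · exact h.sq _ (by omega)
      · rw [mul_assoc, ← mul_assoc (σ (2 * K + 1)), h.comm_odd (i := K) (by omega) (by omega),
          mul_assoc, h.sq (2 * K + 1) (by omega), mul_one, h.sq _ (by omega)]
    · rw [htk k hkK]; exact h.sq _ (by omega)
  refine
    { card := by rw [hΩ]; ring
      four_le := by omega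
      s_sq := hsE
      s_comm := ?_
      s_card := by rw [hE, card_sup_swap hpo hpP hoP, hP, h.card_even (by omega)]; ring
      t_sq := fun k hk => htsq k (by omega)
      t_comm := fun k hk l hl => htt k (by omega) l (by omega)
      ts_comm := ?_
      not_norm := ?_
      trans := ?_ }
  · have hEl : (P ⊔ closure {swap p o}).IsElem2 := (h.isElem2_even (by omega)).sup
      (fun g hg => mul_swap_comm (hpP g hg) (hoP g hg)) (by simp)
    intro i hi j hj
    rw [← hE] at hEl
    exact hEl.comm (mem_genBy (by simpa using hi)) (mem_genBy (by simpa using hj))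
  · intro k hk j hj h1 h2
    rcases Nat.lt_succ_iff_lt_or_eq.1 hj with hj | rfl
    · rw [hsj j (by omega)]
      refine htcomm k (by omega) _ fun l hl hlk => ?_
      exact h.comm_odd_even (by omega) (by omega) (by omega) (by omega)
    · rw [hsK]
      exact (mul_swap_comm (htp k (by omega)) (hto k (by omega))).symm
  · intro k hk
    rw [hE]
    rcases Nat.lt_succ_iff_lt_or_eq.1 (show k < K + 1 by omega) with hkK | rfl
    · obtain ⟨g, hg, hg'⟩ : ∃ g ∈ P, t k * g * t k ∉ P := by
        refine h.not_norm_even (S := {o}ᶜ) (k := k) (l := K) (by omega) ?_ ?_ (by omega) ?_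
        · intro i hi z hz
          simp only [Set.mem_compl_iff, Set.mem_singleton_iff, not_not] at hz
          rw [hz, ho i hi]
        · rw [Set.ncard_compl, Set.ncard_singleton, hΩ]; omega
        · by_cases hkK' : k = K - 1
          · rw [hkK', htK]
            rcases hτ with rfl | rfl
            · exact Or.inl rfl
            · exact Or.inr ⟨by omega, by omega, rfl⟩
          · exact Or.inl (htk k hkK')
      refine ⟨g, mem_sup_left hg, fun hmem => hg' (mem_of_mem_sup_swap hpo hpP hoP hmem ?_)⟩
      simp [hto k (by omega), hoP g hg]
    · refine ⟨swap p o, mem_sup_right (subset_closure rfl), fun hmem => ?_⟩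
      have h1 : (t k * swap p o * t k) o ∈ ({p, o} : Set Ω) :=
        orb_sup_swap_left hpP hoP (Or.inr rfl) (apply_mem_orb hmem o)
      rw [Perm.mul_apply, Perm.mul_apply, hto k le_rfl, swap_apply_right, htk k (by omega),
        hbp] at h1
      simp [hpx.symm, hxo] at h1
  · intro S hS h1 h2
    have hpoS : o ∈ S → p ∈ S := fun hmem => by
      have := h1 (K + 1) (by omega) o hmem
      rwa [hsK, swap_apply_right] at this
    have hb : ∀ z ∈ S, σ (2 * K + 1) z ∈ S := by
      intro z hz
      have := h2 K (by omega) z hz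
      rwa [htk K (by omega)] at this
    have h3 := htr S (by
      obtain ⟨z, hz⟩ := hS
      by_cases hzo : z = o
      · exact ⟨p, hpoS (hzo ▸ hz), hpo⟩
      · exact ⟨z, hz, hzo⟩) (by
      intro i hi z hz
      rcases Nat.even_or_odd' i with ⟨j, rfl | rfl⟩
      · have := h1 j (by omega) z hz
        rwa [hsj j (by omega)] at this
      · by_cases hjK : j = K - 1
        · subst hjK
          have h4 : ∀ z ∈ S, τ z ∈ S := by
            have := h2 (K - 1) (by omega)
            rwa [htK] at this
          rcases hτ with rfl | rfl
          · exact h4 z hz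
          · have := h4 _ (hb z hz)
            rwa [Perm.mul_apply, apply_apply_of_mul_self (h.sq _ (by omega))] at this
        · have := h2 j (by omega) z hz
          rwa [htk j hjK] at this)
    refine Set.eq_univ_of_forall fun z => ?_
    by_cases hzo : z = o
    · have := h1 (K + 1) (by omega) p (h3 p hpo)
      rw [hsK, swap_apply_left] at this
      rwa [hzo]
    · exact h3 z hzo

end IsIndepString

/-- Extension of permutations to one more point, as a group homomorphism. -/
def optionCongrHom (α : Type*) : Perm α →* Perm (Option α) where
  toFun g := optionCongr g
  map_one' := Equiv.optionCongr_refl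
  map_mul' g h := by ext x; cases x <;> rfl

theorem Equiv.Perm.IsSwap.of_optionCongr {α : Type*} [DecidableEq α] {g : Perm α}
    (h : (optionCongrHom α g).IsSwap) : g.IsSwap := by
  obtain ⟨u, v, huv, h⟩ := h
  have hnone : swap u v none = none := by rw [← h]; rfl
  have hu : u ≠ none := by
    rintro rfl
    rw [swap_apply_left] at hnone
    exact huv hnone.symm
  have hv : v ≠ none := by
    rintro rfl
    rw [swap_apply_right] at hnone
    exact huv hnone
  obtain ⟨a, rfl⟩ := Option.ne_none_iff_exists'.1 hu
  obtain ⟨b, rfl⟩ := Option.ne_none_iff_exists'.1 hv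
  refine ⟨a, b, fun e => huv (by rw [e]), ?_⟩
  apply Equiv.optionCongr_injective
  rw [Equiv.optionCongr_swap]
  exact h

namespace IsIndepString

variable {d : ℕ}

theorem map {G H : Type*} [Group G] [Group H] {σ : ℕ → G} (h : IsIndepString d σ) (f : G →* H)
    (hf : Function.Injective f) : IsIndepString d (fun i => f (σ i)) where
  sq i hi := by rw [← map_mul, h.sq i hi, map_one]
  comm i hi j hj hij := by rw [← map_mul, h.comm i hi j hj hij, map_mul]
  indep i hi hmem := by
    refine h.indep i hi ?_
    have e : genBy (fun i => f (σ i)) ((Finset.range d).erase i) =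
        (genBy σ ((Finset.range d).erase i)).map f := by
      rw [MonoidHom.map_closure, Set.image_image]
    rw [e] at hmem
    exact (Subgroup.mem_map_iff_mem hf).1 hmem

/-- In a string of independent involutions of the largest possible length, all members but the
third ones from both ends are transpositions, and these are transpositions up to multiplication by
the corresponding end of the string. -/
theorem isSwap {α : Type*} [Finite α] [DecidableEq α] {σ : ℕ → Perm α} (h : IsIndepString d σ)
    (hd : 6 ≤ d) (hα : Nat.card α = d + 1)
    (htr : ∀ S : Set α, S.Nonempty → (∀ i < d, ∀ z ∈ S, σ i z ∈ S) → S = Set.univ) :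
    (∀ i < d, i ≠ 2 → i ≠ d - 3 → (σ i).IsSwap) ∧ ((σ 2).IsSwap ∨ (σ 2 * σ 0).IsSwap) ∧
      ((σ (d - 3)).IsSwap ∨ (σ (d - 3) * σ (d - 1)).IsSwap) := by
  rcases Nat.even_or_odd' d with ⟨M, rfl | rfl⟩
  · obtain ⟨K, rfl⟩ : ∃ K, M = K + 1 := ⟨M - 1, by omega⟩
    obtain ⟨p, τ, hpo, hKp, hτ, hmax⟩ :=
      (h.map (optionCongrHom α) Equiv.optionCongr_injective).isMaxString_extend (o := none)
      (K := K) (by omega) (by rw [Finite.card_option, hα]; ring) (fun _ _ => rfl) (by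
        rintro S ⟨z, hz, hz'⟩ hS
        obtain ⟨z, rfl⟩ := Option.ne_none_iff_exists'.1 hz'
        have h1 := htr (some ⁻¹' S) ⟨z, hz⟩ (fun i hi z hz => hS i (by omega) (some z) hz)
        intro v hv
        obtain ⟨v, rfl⟩ := Option.ne_none_iff_exists'.1 hv
        exact Set.eq_univ_iff_forall.1 h1 v)
    have hl := hmax.isSwap_left
    have hr := hmax.isSwap_right.2
    refine ⟨fun i hi h2 h3 => ?_, ?_, ?_⟩
    · rcases Nat.even_or_odd' i with ⟨j, rfl | rfl⟩
      · apply Perm.IsSwap.of_optionCongr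
        rcases Nat.eq_zero_or_pos j with rfl | hj
        · simpa using hl.1
        · by_cases hjK : j = K
          · subst hjK
            refine Or.resolve_right (by simpa using hr) ?_
            rintro ⟨u, v, huv, e⟩
            have hp : swap u v p = none := by
              rw [← e]; simp; rfl
            have hswap : swap u v = swap p none := by
              rw [swap_apply_def] at hp
              split_ifs at hp with h4 h5
              · rw [h4, hp]
              · rw [h5, hp, swap_comm]
              · exact absurd hp hpo
            rw [hswap] at e
            exact (h.map (optionCongrHom α) Equiv.optionCongr_injective).ne_one hi
              (mul_eq_right.1 e)
          · have := hl.2.2.1 j (by omega) (by omega)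
            rwa [if_neg (by omega)] at this
      · apply Perm.IsSwap.of_optionCongr
        have := hl.2.2.2 j (by omega)
        rwa [if_neg (by omega)] at this
    · have := hl.2.1
      rw [if_neg (by omega), if_neg (by omega)] at this
      exact this.imp (fun h => Perm.IsSwap.of_optionCongr h) fun h =>
        Perm.IsSwap.of_optionCongr (by
          rw [map_mul]; exact h)
    · have := hl.2.2.2 (K - 1) (by omega)
      rw [if_pos rfl] at this
      rw [show 2 * (K + 1) - 3 = 2 * (K - 1) + 1 by omega, show 2 * (K + 1) - 1 = 2 * K + 1 by omega]
      rcases hτ with rfl | rfl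
      · exact Or.inl (Perm.IsSwap.of_optionCongr this)
      · rw [← map_mul] at this
        exact Or.inr (Perm.IsSwap.of_optionCongr this)
  · have hmax := IsIndepString.isMaxString (N := M + 1) (σ := σ) h (by omega)
      (by rw [hα]; ring) htr
    have hl := hmax.isSwap_left
    have hr := hmax.isSwap_right
    refine ⟨fun i hi h2 h3 => ?_, hl.2.1, ?_⟩
    · rcases Nat.even_or_odd' i with ⟨j, rfl | rfl⟩
      · rcases Nat.eq_zero_or_pos j with rfl | hj
        · exact hl.1
        · by_cases hjM : j = M
          · subst hjM
            simpa using hr.1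
          · exact hl.2.2.1 j (by omega) (by omega)
      · exact hl.2.2.2 j (by omega)
    · have := hr.2
      rw [show 2 * M + 1 - 3 = 2 * (M + 1 - 2) by omega, show 2 * M + 1 - 1 = 2 * (M + 1 - 1) by omega]
      exact this

end IsIndepString

section Path

variable {α : Type*} [DecidableEq α]

theorem Equiv.Perm.IsSwap.eq_swap {u : Perm α} (hu : u.IsSwap) {z : α} (hz : u z ≠ z) :
    u = swap z (u z) := by
  obtain ⟨a, b, hab, rfl⟩ := hu
  rcases eq_or_ne z a with rfl | ha
  · simp
  · rcases eq_or_ne z b with rfl | hb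
    · simp [swap_comm]
    · exact absurd (swap_apply_of_ne_of_ne ha hb) hz

theorem Equiv.Perm.IsSwap.eq_of_commute {u v : Perm α} (hu : u.IsSwap) (hv : v.IsSwap)
    (h : Commute u v) {z : α} (huz : u z ≠ z) (hvz : v z ≠ z) : u = v := by
  rw [hu.eq_swap huz, hv.eq_swap hvz]
  by_contra hne
  have hne' : u z ≠ v z := fun e => hne (by rw [e])
  have h1 := DFunLike.congr_fun h.eq z
  rw [Perm.mul_apply, Perm.mul_apply, hu.eq_swap huz, hv.eq_swap hvz] at h1
  simp only [swap_apply_left] at h1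
  rw [swap_apply_of_ne_of_ne hvz hne'.symm, swap_apply_of_ne_of_ne huz hne'] at h1
  exact hne' h1.symm

/-- A transitive string of transpositions is a path. -/
theorem exists_path_of_isSwap {d : ℕ} (hd : 3 ≤ d) {u : ℕ → Perm α}
    (hu : ∀ i < d, (u i).IsSwap) (hc : ∀ i < d, ∀ j < d, i + 2 ≤ j → Commute (u i) (u j))
    (hne : ∀ i < d, ∀ j < d, i + 2 ≤ j → u i ≠ u j)
    (htr : ∀ S : Set α, S.Nonempty → (∀ i < d, ∀ z ∈ S, u i z ∈ S) → S = Set.univ) :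
    ∃ p : ℕ → α, (∀ i ≤ d, ∀ j ≤ d, p i = p j → i = j) ∧
      ∀ i < d, u i = swap (p i) (p (i + 1)) := by
  have hdisj : ∀ i < d, ∀ j < d, i + 2 ≤ j → ∀ z, u i z ≠ z → u j z = z := by
    intro i hi j hj hij z h1
    by_contra h2
    exact hne i hi j hj hij ((hu i hi).eq_of_commute (hu j hj) (hc i hi j hj hij) h1 h2)
  have hmove : ∀ i < d, ∃ z, u i z ≠ z := by
    intro i hi
    obtain ⟨a, b, hab, e⟩ := hu i hi
    exact ⟨a, by rw [e, swap_apply_left]; exact hab.symm⟩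
  have hmeet : ∀ i, i + 1 < d → ∃ z, u i z ≠ z ∧ u (i + 1) z ≠ z := by
    intro i hi
    by_contra! hcon
    have h1 := htr {z | ∃ j ≤ i, u j z ≠ z} (by
      obtain ⟨z, hz⟩ := hmove i (by omega)
      exact ⟨z, i, le_rfl, hz⟩) (by
      rintro k hk z ⟨j, hj, hz⟩
      by_cases hkz : u k z = z
      · rw [hkz]; exact ⟨j, hj, hz⟩
      · by_cases hki : k ≤ i
        · exact ⟨k, hki, fun e => hkz ((u k).injective e)⟩
        · exfalso
          by_cases hjk : j + 2 ≤ k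
          · exact hkz (hdisj j (by omega) k hk hjk z hz)
          · obtain rfl : j = i := by omega
            obtain rfl : k = j + 1 := by omega
            exact hkz (hcon z hz))
    obtain ⟨z, hz⟩ := hmove (i + 1) hi
    have hzS : z ∈ {z | ∃ j ≤ i, u j z ≠ z} := by rw [h1]; exact Set.mem_univ z
    obtain ⟨j, hj, hjz⟩ := hzS
    rcases Nat.lt_or_eq_of_le hj with hj | rfl
    · exact hz (hdisj j (by omega) (i + 1) hi (by omega) z hjz)
    · exact hz (hcon z hjz)
  have : Nonempty α := ⟨(hmove 0 (by omega)).choose⟩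
  choose! q hq using hmeet
  set p : ℕ → α := fun i => if i = 0 then u 0 (q 0) else if i = d then u (d - 1) (q (d - 2))
    else q (i - 1) with hp
  have hp0 : p 0 = u 0 (q 0) := by simp [hp]
  have hpd : p d = u (d - 1) (q (d - 2)) := by simp [hp]; omega
  have hpi : ∀ i, i + 1 < d → p (i + 1) = q i := by
    intro i hi; simp [hp]; omega
  have hq2 : u (d - 1) (q (d - 2)) ≠ q (d - 2) := by
    have := (hq (d - 2) (by omega)).2
    rwa [show d - 2 + 1 = d - 1 by omega] at this
  have hr : ∀ i < d, u i (p i) ≠ p i := by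
    intro i hi
    rcases Nat.eq_zero_or_pos i with rfl | hpos
    · rw [hp0]
      exact fun e => (hq 0 (by omega)).1 ((u 0).injective e)
    · obtain ⟨i, rfl⟩ : ∃ k, i = k + 1 := ⟨i - 1, by omega⟩
      rw [hpi i hi]; exact (hq i hi).2
  have hl : ∀ i < d, u i (p (i + 1)) ≠ p (i + 1) := by
    intro i hi
    by_cases hid : i + 1 = d
    · obtain rfl : i = d - 1 := by omega
      rw [hid, hpd]
      exact fun e => hq2 ((u _).injective e)
    · rw [hpi i (by omega)]; exact (hq i (by omega)).1
  have hcons : ∀ i < d, p i ≠ p (i + 1) := by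
    intro i hi
    rcases Nat.eq_zero_or_pos i with rfl | hpos
    · rw [hp0, hpi 0 (by omega)]; exact (hq 0 (by omega)).1
    · by_cases hid : i + 1 = d
      · rw [hid, hpd]
        obtain ⟨k, rfl⟩ : ∃ k, i = k + 1 := ⟨i - 1, by omega⟩
        rw [hpi k hi, show d - 2 = k by omega]
        rw [show d - 2 = k by omega] at hq2
        exact hq2.symm
      · intro e
        have h1 := hl (i - 1) (by omega)
        rw [show i - 1 + 1 = i by omega] at h1
        exact hr (i + 1) (by omega) (by
          rw [← e]; exact hdisj (i - 1) (by omega) (i + 1) (by omega) (by omega) _ h1)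
  refine ⟨p, ?_, ?_⟩
  · have hlt : ∀ i j, i < j → j ≤ d → p i ≠ p j := by
      intro i j hij hj e
      have hli := hr i (by omega)
      have hlj := hl (j - 1) (by omega)
      rw [show j - 1 + 1 = j by omega] at hlj
      by_cases h1 : j = i + 1
      · exact hcons i (by omega) (h1 ▸ e)
      · by_cases h2 : j = i + 2
        · by_cases h3 : j < d
          · exact hr j h3 (e ▸ hdisj i (by omega) j h3 (by omega) _ hli)
          · have h4 := hl (i - 1) (by omega)
            rw [show i - 1 + 1 = i by omega] at h4
            exact hlj (e ▸ hdisj (i - 1) (by omega) (j - 1) (by omega) (by omega) _ h4)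
        · exact hlj (e ▸ hdisj i (by omega) (j - 1) (by omega) (by omega) _ hli)
    intro i hi j hj e
    rcases lt_trichotomy i j with hij | hij | hij
    · exact absurd e (hlt i j hij hj)
    · exact hij
    · exact absurd e.symm (hlt j i hij hi)
  · intro i hi
    have h1 := (hu i hi).eq_swap (hr i hi)
    have h3 : p (i + 1) = u i (p i) := by
      by_contra h3
      refine hl i hi ?_
      rw [h1]
      exact swap_apply_of_ne_of_ne (hcons i hi).symm h3
    rw [h3]
    exact h1

/-- If `swap a b * w` and `swap b c` lie in a group, and `w` fixes `a`, `b`, `c`, then `w` lies in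
the group. -/
theorem mem_of_swap_mul_mem {H : Subgroup (Perm α)} {a b c : α} {w : Perm α} (hab : a ≠ b)
    (hac : a ≠ c) (hbc : b ≠ c) (hb : w b = b) (hc : w c = c)
    (h1 : swap a b * w ∈ H) (h2 : swap b c ∈ H) : w ∈ H := by
  have h3 : swap a c ∈ H := by
    have := H.mul_mem (H.mul_mem h1 h2) (H.inv_mem h1)
    rwa [mul_swap_eq_swap_mul, mul_inv_cancel_right, Perm.mul_apply, Perm.mul_apply, hb, hc,
      swap_apply_right, swap_apply_of_ne_of_ne hac.symm hbc.symm] at this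
  have h4 : swap a b ∈ H := by
    have := H.mul_mem (H.mul_mem h2 h3) (H.inv_mem h2)
    rwa [mul_swap_eq_swap_mul, mul_inv_cancel_right, swap_apply_right,
      swap_apply_of_ne_of_ne hab hac] at this
  exact (H.mul_mem_cancel_left h4).1 h1

end Path

/-- A transitive string of independent involutions of length one less than the number of points is
the path of transpositions. -/
theorem IsIndepString.exists_path {α : Type*} [Finite α] [DecidableEq α] {d : ℕ} {σ : ℕ → Perm α}
    (h : IsIndepString d σ) (hd : 6 ≤ d) (hα : Nat.card α = d + 1)
    (htr : ∀ S : Set α, S.Nonempty → (∀ i < d, ∀ z ∈ S, σ i z ∈ S) → S = Set.univ) :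
    ∃ p : ℕ → α, (∀ i ≤ d, ∀ j ≤ d, p i = p j → i = j) ∧
      ∀ i < d, σ i = swap (p i) (p (i + 1)) := by
  obtain ⟨hswap, hleft, hright⟩ := h.isSwap hd hα htr
  obtain ⟨v, hv, hvs⟩ : ∃ v, (v = σ 2 ∨ v = σ 2 * σ 0) ∧ v.IsSwap := by
    rcases hleft with h1 | h1 <;> exact ⟨_, by tauto, h1⟩
  obtain ⟨w, hw, hws⟩ : ∃ w, (w = σ (d - 3) ∨ w = σ (d - 3) * σ (d - 1)) ∧ w.IsSwap := by
    rcases hright with h1 | h1 <;> exact ⟨_, by tauto, h1⟩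
  obtain ⟨u, hu2, hu3, hui⟩ : ∃ u : ℕ → Perm α, u 2 = v ∧ u (d - 3) = w ∧
      ∀ i, i ≠ 2 → i ≠ d - 3 → u i = σ i := by
    refine ⟨fun i => if i = 2 then v else if i = d - 3 then w else σ i, by simp, ?_, ?_⟩
    · simp; omega
    · intro i h1 h2; simp [h1, h2]
  have hmem : ∀ i < d, ∀ H : Subgroup (Perm α),
      (∀ k < d, (k = i ∨ i = 2 ∧ k = 0 ∨ i = d - 3 ∧ k = d - 1) → σ k ∈ H) → u i ∈ H := by
    intro i hi H hH
    by_cases h2 : i = 2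
    · subst h2
      rw [hu2]
      rcases hv with rfl | rfl
      · exact hH _ hi (by omega)
      · exact mul_mem (hH _ hi (by omega)) (hH _ (by omega) (by omega))
    · by_cases h3 : i = d - 3
      · subst h3
        rw [hu3]
        rcases hw with rfl | rfl
        · exact hH _ hi (by omega)
        · exact mul_mem (hH _ hi (by omega)) (hH _ (by omega) (by omega))
      · rw [hui i h2 h3]; exact hH i hi (by omega)
  have hσmem : ∀ i < d, ∀ H : Subgroup (Perm α), u i ∈ H → (i = 2 → σ 0 ∈ H) →
      (i = d - 3 → σ (d - 1) ∈ H) → σ i ∈ H := by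
    intro i hi H hH h0 h1
    by_cases h2 : i = 2
    · subst h2
      rw [hu2] at hH
      rcases hv with rfl | rfl
      · exact hH
      · exact (H.mul_mem_cancel_right (h0 rfl)).1 hH
    · by_cases h3 : i = d - 3
      · subst h3
        rw [hu3] at hH
        rcases hw with rfl | rfl
        · exact hH
        · exact (H.mul_mem_cancel_right (h1 rfl)).1 hH
      · rwa [hui i h2 h3] at hH
  have hσc : ∀ k < d, ∀ l < d, k ≠ l + 1 → l ≠ k + 1 → Commute (σ k) (σ l) := by
    intro k hk l hl h1 h2
    rcases lt_trichotomy k l with hkl | rfl | hkl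
    · exact h.comm k hk l hl (by omega)
    · exact Commute.refl _
    · exact (h.comm l hl k hk (by omega)).symm
  have hcomm : ∀ i < d, ∀ g, (∀ k < d, (k = i ∨ i = 2 ∧ k = 0 ∨ i = d - 3 ∧ k = d - 1) →
      Commute (σ k) g) → Commute (u i) g := by
    intro i hi g hg
    have := hmem i hi (Subgroup.centralizer {g}) fun k hk hki =>
      Subgroup.mem_centralizer_singleton_iff.2 (hg k hk hki).eq
    exact Subgroup.mem_centralizer_singleton_iff.1 this
  obtain ⟨p, hinj, hp⟩ := exists_path_of_isSwap (d := d) (u := u) (by omega)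
    (fun i hi => by
      by_cases h2 : i = 2
      · rwa [h2, hu2]
      · by_cases h3 : i = d - 3
        · rwa [h3, hu3]
        · rw [hui i h2 h3]; exact hswap i hi h2 h3)
    (fun i hi j hj hij => hcomm i hi _ fun k hk hki => (hcomm j hj _ fun l hl hlj =>
      hσc l hl k hk (by omega) (by omega)).symm)
    (fun i hi j hj hij e => by
      by_cases h2 : j = 2
      · refine h.indep j hj (hσmem j hj _ (e ▸ hmem i hi _ fun k hk hki => ?_) (fun _ => ?_)
          fun _ => ?_) <;> exact mem_genBy_erase (by omega) (by omega)
      · refine h.indep i hi (hσmem i hi _ (e ▸ hmem j hj _ fun k hk hki => ?_) (fun _ => ?_)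
          fun _ => ?_) <;> exact mem_genBy_erase (by omega) (by omega))
    (fun S hS hS' => htr S hS (by
      have hH : ∀ g ∈ genBy u (Finset.range d), ∀ z ∈ S, g z ∈ S :=
        Subgroup.closure_mapsTo (by
          rintro _ ⟨i, hi, rfl⟩
          exact hS' i (by simpa using hi))
      have hui' : ∀ i < d, i ≠ 2 → i ≠ d - 3 → σ i ∈ genBy u (Finset.range d) := by
        intro i hi h2 h3
        rw [← hui i h2 h3]; exact mem_genBy (by simpa using hi)
      intro i hi
      exact hH _ (hσmem i hi _ (mem_genBy (by simpa using hi))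
        (fun _ => hui' 0 (by omega) (by omega) (by omega))
        (fun _ => hui' (d - 1) (by omega) (by omega) (by omega)))))
  have hpne : ∀ i ≤ d, ∀ j ≤ d, i ≠ j → p i ≠ p j := fun i hi j hj hij e => hij (hinj i hi j hj e)
  have hpfix : ∀ i < d, ∀ j ≤ d, j ≠ i → j ≠ i + 1 → u i (p j) = p j := by
    intro i hi j hj h1 h2
    rw [hp i hi]
    exact swap_apply_of_ne_of_ne (hpne j hj i (by omega) h1) (hpne j hj (i + 1) (by omega) h2)
  have h0 : u 0 = σ 0 := hui 0 (by omega) (by omega)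
  have hlast : u (d - 1) = σ (d - 1) := hui _ (by omega) (by omega)
  have hv2 : σ 2 = u 2 := by
    rcases hv with rfl | rfl
    · exact hu2.symm
    · exfalso
      refine h.indep 0 (by omega) ?_
      rw [← h0]
      refine mem_of_swap_mul_mem (a := p 2) (b := p 3) (c := p 4)
        (hpne _ (by omega) _ (by omega) (by omega)) (hpne _ (by omega) _ (by omega) (by omega))
        (hpne _ (by omega) _ (by omega) (by omega))
        (hpfix 0 (by omega) 3 (by omega) (by omega) (by omega))
        (hpfix 0 (by omega) 4 (by omega) (by omega) (by omega)) ?_ ?_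
      · rw [← hp 2 (by omega), hu2, h0, mul_assoc, h.sq 0 (by omega), mul_one]
        exact mem_genBy_erase (by omega) (by omega)
      · rw [← hp 3 (by omega)]
        exact hmem 3 (by omega) _ fun k hk hki => mem_genBy_erase hk (by omega)
  have hw3 : σ (d - 3) = u (d - 3) := by
    rcases hw with rfl | rfl
    · exact hu3.symm
    · exfalso
      refine h.indep (d - 1) (by omega) ?_
      rw [← hlast]
      refine mem_of_swap_mul_mem (a := p (d - 3 + 1)) (b := p (d - 3)) (c := p (d - 4))
        (hpne _ (by omega) _ (by omega) (by omega)) (hpne _ (by omega) _ (by omega) (by omega))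
        (hpne _ (by omega) _ (by omega) (by omega))
        (hpfix (d - 1) (by omega) _ (by omega) (by omega) (by omega))
        (hpfix (d - 1) (by omega) _ (by omega) (by omega) (by omega)) ?_ ?_
      · rw [swap_comm, ← hp (d - 3) (by omega), hu3, hlast, mul_assoc, h.sq (d - 1) (by omega),
          mul_one]
        exact mem_genBy_erase (by omega) (by omega)
      · have h4 := hp (d - 4) (by omega)
        rw [show d - 4 + 1 = d - 3 by omega] at h4
        rw [swap_comm, ← h4]
        exact hmem (d - 4) (by omega) _ fun k hk hki => mem_genBy_erase hk (by omega)
  refine ⟨p, hinj, fun i hi => ?_⟩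
  rw [← hp i hi]
  by_cases h2 : i = 2
  · rw [h2, hv2]
  · by_cases h3 : i = d - 3
    · rw [h3, hw3]
    · exact (hui i h2 h3).symm

theorem stmt15 {n r m : ℕ} (hm7 : 7 ≤ m) (hn : n = 2 * m) (hr : n / 2 ≤ r)
    (ρ : Fin r → Equiv.Perm (Fin n)) (hstring : IsStringC ρ)
    (htrans : MulAction.IsPretransitive ↥(Subgroup.closure (Set.range ρ)) (Fin n))
    (b : Fin n → Fin m) (hbsurj : Function.Surjective b)
    (hfib : ∀ c : Fin m, Set.ncard {x | b x = c} = 2)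
    (hcompat : ∀ g ∈ Subgroup.closure (Set.range ρ), ∀ x y : Fin n,
      b x = b y → b (g x) = b (g y))
    -- every fiber of b is a maximal block
    (hmax : ∀ (c : Fin m) (X : Set (Fin n)),
      MulAction.IsBlock ↥(Subgroup.closure (Set.range ρ)) X →
      {x | b x = c} ⊆ X → X = {x | b x = c} ∨ X = Set.univ)
    -- π l is the induced block permutation φ (ρ l)
    (π : Fin r → Equiv.Perm (Fin m))
    (hπ : ∀ (l : Fin r) (x : Fin n), b (ρ l x) = π l (b x))
    -- L generates the image of φ independently
    (L : Set (Fin r))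
    (hLgen : Subgroup.closure (π '' L) = Subgroup.closure (Set.range π))
    (hLind : ∀ l ∈ L, π l ∉ Subgroup.closure (π '' (L \ {l})))
    -- R ∪ C = {0}, i.e. L = Fin r \ {0}
    (hL : L = {i : Fin r | (i : ℕ) ≠ 0}) :
    r = n / 2 ∧
    Subgroup.closure (Set.range π) = ⊤ ∧
    ∃ c : Fin m ≃ Fin m, ∀ j : ℕ, 1 ≤ j → j ≤ r - 1 →
      ∀ (h1 : j - 1 < m) (h2 : j < m),
        π ⟨j, by omega⟩ = Equiv.swap (c ⟨j - 1, h1⟩) (c ⟨j, h2⟩) := by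
  have hrm : m ≤ r := by omega
  have hsq : ∀ l, π l * π l = 1 := by
    intro l
    ext1 z
    obtain ⟨x, rfl⟩ := hbsurj z
    have h2 : ρ l * ρ l = 1 := by
      rw [← pow_two, ← hstring.1.1 l, pow_orderOf_eq_one]
    rw [Equiv.Perm.mul_apply, ← hπ, ← hπ, ← Equiv.Perm.mul_apply, h2]
    rfl
  have hcomm : ∀ i j : Fin r, (i : ℕ) + 2 ≤ j → π i * π j = π j * π i := by
    intro i j hij
    have h2 : ρ i * ρ j * (ρ i * ρ j) = 1 := by
      rw [← pow_two]
      refine hstring.1.2 i j ?_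
      rw [lt_abs]
      omega
    have h3 : π i * π j * (π i * π j) = 1 := by
      ext1 z
      obtain ⟨x, rfl⟩ := hbsurj z
      simp only [Equiv.Perm.mul_apply, ← hπ]
      simp only [← Equiv.Perm.mul_apply, ← mul_assoc] at h2 ⊢
      rw [h2]
      rfl
    have hi : (π i)⁻¹ = π i := inv_eq_of_mul_eq_one_right (hsq i)
    have hj : (π j)⁻¹ = π j := inv_eq_of_mul_eq_one_right (hsq j)
    rw [← inv_eq_of_mul_eq_one_right h3, mul_inv_rev, hi, hj]
  have htr : ∀ S : Set (Fin m), S.Nonempty → (∀ l ∈ L, ∀ z ∈ S, π l z ∈ S) → S = Set.univ := by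
    rintro S ⟨z₀, hz₀⟩ hS
    have hS' : ∀ g ∈ Subgroup.closure (Set.range π), ∀ z ∈ S, g z ∈ S := by
      rw [← hLgen]
      refine Subgroup.closure_mapsTo ?_
      rintro _ ⟨l, hl, rfl⟩
      exact hS l hl
    have hT : ∀ g ∈ Subgroup.closure (Set.range ρ), ∀ x ∈ b ⁻¹' S, g x ∈ b ⁻¹' S := by
      refine Subgroup.closure_mapsTo ?_
      rintro _ ⟨l, rfl⟩ x hx
      rw [Set.mem_preimage, hπ]
      exact hS' _ (Subgroup.subset_closure ⟨l, rfl⟩) _ hx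
    refine Set.eq_univ_of_forall fun z => ?_
    obtain ⟨x, rfl⟩ := hbsurj z
    obtain ⟨x₀, rfl⟩ := hbsurj z₀
    obtain ⟨g, rfl⟩ := htrans.exists_smul_eq x₀ x
    exact hT g g.2 x₀ hz₀
  let σ : ℕ → Equiv.Perm (Fin m) := fun i => if h : i + 1 < r then π ⟨i + 1, h⟩ else 1
  have hσ : ∀ i (h : i + 1 < r), σ i = π ⟨i + 1, h⟩ := fun i h => dif_pos h
  have hind : IsIndepString (r - 1) σ := by
    refine ⟨fun i hi => ?_, fun i hi j hj hij => ?_, fun i hi hmem => ?_⟩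
    · rw [hσ i (by omega), hsq]
    · rw [hσ i (by omega), hσ j (by omega)]
      exact hcomm _ _ (by simp only; omega)
    · have hi' : i + 1 < r := by omega
      refine hLind ⟨i + 1, hi'⟩ (by simp [hL]) ?_
      rw [hσ i hi'] at hmem
      refine Subgroup.closure_mono ?_ hmem
      rintro _ ⟨j, hj, rfl⟩
      simp only [Finset.coe_erase, Finset.coe_range, Set.mem_sdiff, Set.mem_Iio,
        Set.mem_singleton_iff] at hj
      refine ⟨⟨j + 1, by omega⟩, ?_, (hσ j (by omega)).symm⟩
      simp [hL, hj.2]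
  have hlt := hind.lt_card (by omega)
  rw [Nat.card_fin] at hlt
  have hrm' : r = m := by omega
  obtain ⟨p, hpinj, hp⟩ := hind.exists_path (by omega) (by rw [Nat.card_fin]; omega) (by
    intro S hne hS
    refine htr S hne fun l hl z hz => ?_
    have hl0 : (l : ℕ) ≠ 0 := by simpa [hL] using hl
    have h1 := hS (l - 1) (by omega) z hz
    rw [hσ _ (by omega)] at h1
    convert h1 using 3
    ext
    simp only
    omega)
  have hpath : ∀ j (hj : j < r), j ≠ 0 → π ⟨j, hj⟩ = Equiv.swap (p (j - 1)) (p j) := by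
    intro j hj hj0
    obtain ⟨i, rfl⟩ : ∃ i, j = i + 1 := ⟨j - 1, by omega⟩
    rw [← hσ i hj, hp i (by omega), Nat.add_sub_cancel]
  refine ⟨by omega, ?_, ?_⟩
  · have : MulAction.IsPretransitive (Subgroup.closure (π '' L)) (Fin m) := by
      refine ⟨fun x y => ?_⟩
      have h1 : MulAction.orbit (Subgroup.closure (π '' L)) x = Set.univ := by
        refine htr _ (MulAction.nonempty_orbit x) fun l hl z hz => ?_
        exact MulAction.mem_orbit_of_mem_orbit
          (⟨π l, Subgroup.subset_closure ⟨l, hl, rfl⟩⟩ : Subgroup.closure (π '' L)) hz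
      exact (Set.ext_iff.1 h1 y).2 trivial
    rw [← hLgen]
    refine closure_of_isSwap_of_isPretransitive ?_
    rintro _ ⟨l, hl, rfl⟩
    have hl0 : (l : ℕ) ≠ 0 := by simpa [hL] using hl
    refine ⟨_, _, fun h => ?_, hpath l l.2 hl0⟩
    have := hpinj _ (by omega) _ (by omega) h
    omega
  · have hinj : Function.Injective fun i : Fin m => p i := fun i j hij =>
      Fin.ext (hpinj i (by omega) j (by omega) hij)
    refine ⟨Equiv.ofBijective _ (Finite.injective_iff_bijective.1 hinj), fun j hj hjr _ _ => ?_⟩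
    exact hpath j (by omega) (by omega)
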